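/- Let α ≤ β ≤ −1 be negative integers, let M = (M_i)_{i≥0} be real parameters with M_i ∉ {0,1}, and let F be a finite set of positive integers with {−β, …, −α−β−1} ⊆ F. Assume Ω_{M,F}^{α,β}(x) ≠ 0 for all x ∈ [−1,1]. Then the weight ω_{α,β;M,F}(x) = (1−x)^{α+n_F}(1+x)^{β+n_F} / (Ω_{M,F}^{α,β}(x))² is a positive integrable weight on [−1,1], the exceptional Jacobi polynomials P_n^{α,β;M,F}, n ∈ σ_F, are mutually orthogonal in L²([−1,1], ω_{α,β;M,F}), and their linear span is dense in L²([−1,1], ω_{α,β;M,F}) (i.e., they form a complete orthogonal system). -/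

import Mathlib

open Finset MeasureTheory

noncomputable section ExceptionalHahnJacobi

/-- Pochhammer symbol `(z)_m = z (z+1) ⋯ (z+m-1)`. -/
def poch (z : ℝ) (m : ℕ) : ℝ := ∏ i ∈ Finset.range m, (z + (i : ℝ))

/-- Pochhammer symbol with integer exponent; `(z)_{-k} = 1 / ((z-1)(z-2)⋯(z-k))`. -/
def pochZ (z : ℝ) (m : ℤ) : ℝ :=
  if 0 ≤ m then poch z m.toNat else 1 / poch (z - ((-m).toNat : ℝ)) (-m).toNat

/-- Generalized binomial coefficient `C(z, k) = z(z-1)⋯(z-k+1)/k!`. -/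
def genBinom (z : ℝ) (k : ℕ) : ℝ := (∏ i ∈ Finset.range k, (z - (i : ℝ))) / (k.factorial : ℝ)

/-- `λ^{a,b}(x) = x (x + a + b + 1)`. -/
def lam (a b x : ℝ) : ℝ := x * (x + a + b + 1)

/-- Hahn polynomial `h_n^{a,b,N}(x)`. -/
def hahn (a b N : ℝ) (n : ℕ) (x : ℝ) : ℝ :=
  ∑ j ∈ Finset.range (n + 1),
    poch (-(n : ℝ)) j * poch (a + b + (n : ℝ) + 1) j * poch (-N + (j : ℝ)) (n - j) *
      poch (a + (j : ℝ) + 1) (n - j) * poch (-x) j / (j.factorial : ℝ)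

/-- Dual Hahn polynomial `R_n^{a,b,N}(x)`. -/
def dualHahn (a b N : ℝ) (n : ℕ) (x : ℝ) : ℝ :=
  ∑ j ∈ Finset.range (n + 1),
    poch (-(n : ℝ)) j * poch (-N + (j : ℝ)) (n - j) * poch (a + (j : ℝ) + 1) (n - j) /
        ((n.factorial : ℝ) * (-1 : ℝ) ^ j * (j.factorial : ℝ)) *
      ∏ i ∈ Finset.range j, (x - (i : ℝ) * (a + b + 1 + (i : ℝ)))

/-- Dual Hahn polynomial with integer degree; zero for negative degree. -/
def dualHahnZ (a b N : ℝ) (m : ℤ) (x : ℝ) : ℝ :=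
  if 0 ≤ m then dualHahn a b N m.toNat x else 0

/-- Jacobi polynomial `P_n^{a,b}(x)`. -/
def jacobiP (a b : ℝ) (n : ℕ) (x : ℝ) : ℝ :=
  (2 : ℝ)⁻¹ ^ n * ∑ j ∈ Finset.range (n + 1),
    genBinom ((n : ℝ) + a) j * genBinom ((n : ℝ) + b) (n - j) * (x - 1) ^ (n - j) * (x + 1) ^ j

/-- The function `φ_u^{α,β,N}(s,x)`, a normalized terminating ₃F₂. -/
def phiH (α β : ℤ) (N : ℝ) (u : ℕ) (s x : ℝ) : ℝ :=
  poch ((α : ℝ) + 1) (max u (-α - β - (u : ℤ) - 1).toNat) *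
    poch (-N) (max u (-α - β - (u : ℤ) - 1).toNat) *
    ∑ j ∈ Finset.range (u + 1),
      poch (-(u : ℝ)) j * poch ((u : ℝ) - s + (α : ℝ) + (β : ℝ) + 1) j * poch (-x) j /
        (poch ((α : ℝ) - s + 1) j * poch (-N) j * (j.factorial : ℝ))

/-- The polynomials `Ĥ_n^{α,β,N;M}(x)`. -/
def Hhat (α β : ℤ) (N : ℝ) (M : ℕ → ℝ) (n : ℕ) (x : ℝ) : ℝ :=
  if ⌈((-α - β : ℤ) : ℚ) / 2⌉ ≤ (n : ℤ) ∧ (n : ℤ) ≤ -α - 1 then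
    deriv (fun s => phiH α β N n s x) 0 -
      deriv (fun s => phiH α β N (-α - β - (n : ℤ) - 1).toNat s x) 0
  else if -α ≤ (n : ℤ) ∧ (n : ℤ) ≤ -α - β - 1 then
    (-1 : ℝ) ^ ((β : ℤ) + (n : ℤ)) * ((β + (n : ℤ)).toNat.factorial : ℝ) *
      (((-α - β - (n : ℤ) - 1).toNat.factorial : ℝ) * poch (-x) (-α).toNat *
          hahn (-(α : ℝ)) (β : ℝ) ((α : ℝ) + N) ((α + (n : ℤ)).toNat) (x + (α : ℝ)) +
        (((α + (n : ℤ)).toNat.factorial : ℝ)) *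
            poch (-N - (α : ℝ) - (β : ℝ) - (n : ℝ) - 1) (2 * (n : ℤ) + α + β + 1).toNat /
            (M ((α + (n : ℤ)).toNat) - 1) *
          hahn (α : ℝ) (β : ℝ) N ((-α - β - (n : ℤ) - 1).toNat) x)
  else hahn (α : ℝ) (β : ℝ) N n x

/-- The function `φ_u^{α,β}(s,x)`, a normalized terminating ₂F₁. -/
def phiJ (α β : ℤ) (u : ℕ) (s x : ℝ) : ℝ :=
  poch ((α : ℝ) + 1) (max u (-α - β - (u : ℤ) - 1).toNat) /
      ((max u.factorial (-α - β - (u : ℤ) - 1).toNat.factorial : ℕ) : ℝ) *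
    ∑ j ∈ Finset.range (u + 1),
      poch (-(u : ℝ)) j * poch ((u : ℝ) - s + (α : ℝ) + (β : ℝ) + 1) j /
          (poch ((α : ℝ) - s + 1) j * (j.factorial : ℝ)) * ((1 - x) / 2) ^ j

/-- The polynomials `P̂_n^{α,β;M}(x)`. -/
def Phat (α β : ℤ) (M : ℕ → ℝ) (n : ℕ) (x : ℝ) : ℝ :=
  if ⌈((-α - β : ℤ) : ℚ) / 2⌉ ≤ (n : ℤ) ∧ (n : ℤ) ≤ -α - 1 then
    deriv (fun s => phiJ α β n s x) 0 -
      deriv (fun s => phiJ α β (-α - β - (n : ℤ) - 1).toNat s x) 0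
  else if -α ≤ (n : ℤ) ∧ (n : ℤ) ≤ -α - β - 1 then
    (-1 : ℝ) ^ ((β : ℤ) + (n : ℤ)) *
      ((((n : ℤ) + α).toNat.factorial : ℝ) * (((n : ℤ) + β).toNat.factorial : ℝ) *
        ((-α - β - (n : ℤ) - 1).toNat.factorial : ℝ)) / (n.factorial : ℝ) *
      ((M ((α + (n : ℤ)).toNat) - 1)⁻¹ * jacobiP (α : ℝ) (β : ℝ) ((-α - β - (n : ℤ) - 1).toNat) x +
        ((1 - x) / 2) ^ (-α).toNat * jacobiP (-(α : ℝ)) (β : ℝ) ((α + (n : ℤ)).toNat) x)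
  else jacobiP (α : ℝ) (β : ℝ) n x

/-- `u_F = Σ_{f ∈ F} f - C(n_F + 1, 2)`. -/
def uF (F : Finset ℕ) : ℕ := (∑ f ∈ F, f) - (F.card + 1).choose 2

/-- `n ∈ σ_F = {u_F, u_F + 1, …} \ {u_F + f : f ∈ F}`. -/
def inSigma (F : Finset ℕ) (n : ℕ) : Prop := uF F ≤ n ∧ n - uF F ∉ F

/-- The `i`-th element of `F` in increasing order. -/
def elemOf (F : Finset ℕ) (i : Fin F.card) : ℕ := ((F.orderIsoOfFin rfl i : {x // x ∈ F}) : ℕ)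

/-- The `i`-th element of a finite set of integers, in increasing order. -/
def elemOfZ (S : Finset ℤ) (i : Fin S.card) : ℤ := ((S.orderIsoOfFin rfl i : {x // x ∈ S}) : ℤ)

/-- Exceptional Hahn polynomial `h_n^{α,β,N;M,F}(x)`. -/
def exHahn (α β : ℤ) (N : ℝ) (M : ℕ → ℝ) (F : Finset ℕ) (n : ℕ) (x : ℝ) : ℝ :=
  Matrix.det (Matrix.of fun i j : Fin (F.card + 1) =>
    Fin.cases (Hhat α β N M (n - uF F) (x + ((j : ℕ) : ℝ)))
      (fun k => Hhat α β N M (elemOf F k) (x + ((j : ℕ) : ℝ))) i)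

/-- The polynomial `Ω_{M,F}^{α,β,N}(x)`. -/
def OmegaH (α β : ℤ) (N : ℝ) (M : ℕ → ℝ) (F : Finset ℕ) (x : ℝ) : ℝ :=
  Matrix.det (Matrix.of fun i j : Fin F.card =>
    Hhat α β N M (elemOf F i) (x + ((j : ℕ) : ℝ)))

/-- The polynomial `Λ_{M,F}^{α,β,N}(x)` (columns `j ∈ {1,…,n_F+1}`, `j ≠ n_F`). -/
def LambdaH (α β : ℤ) (N : ℝ) (M : ℕ → ℝ) (F : Finset ℕ) (x : ℝ) : ℝ :=
  Matrix.det (Matrix.of fun i j : Fin F.card =>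
    Hhat α β N M (elemOf F i)
      (x + ((if (j : ℕ) = F.card - 1 then F.card else (j : ℕ) : ℕ) : ℝ)))

/-- Exceptional Jacobi polynomial `P_n^{α,β;M,F}(x)`. -/
def exJacobi (α β : ℤ) (M : ℕ → ℝ) (F : Finset ℕ) (n : ℕ) (x : ℝ) : ℝ :=
  Matrix.det (Matrix.of fun i j : Fin (F.card + 1) =>
    Fin.cases (iteratedDeriv (j : ℕ) (Phat α β M (n - uF F)) x)
      (fun k => iteratedDeriv (j : ℕ) (Phat α β M (elemOf F k)) x) i)

/-- The polynomial `Ω_{M,F}^{α,β}(x)`. -/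
def OmegaJ (α β : ℤ) (M : ℕ → ℝ) (F : Finset ℕ) (x : ℝ) : ℝ :=
  Matrix.det (Matrix.of fun i j : Fin F.card =>
    iteratedDeriv (j : ℕ) (Phat α β M (elemOf F i)) x)

/-- `F_ext = F \ {-β, …, -α-β-1}`. -/
def Fext (α β : ℤ) (F : Finset ℕ) : Finset ℕ :=
  F.filter fun f : ℕ => ((f : ℤ) < -β ∨ -α - β ≤ (f : ℤ))

/-- Admissibility of the data `α, β, M, F`. -/
def IsAdmissible (α β : ℤ) (M : ℕ → ℝ) (F : Finset ℕ) : Prop :=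
  (∀ i : ℕ, (i : ℤ) ≤ -β - 1 → (∀ f ∈ F, (i : ℤ) ≠ -β - (f : ℤ) - 1) →
      Real.sign (M i) =
        Real.sign (∏ f ∈ Fext α β F, (((i : ℝ) - (f : ℝ) - (α : ℝ)) * ((i : ℝ) + (f : ℝ) + (β : ℝ) + 1)))) ∧
  (∀ x : ℤ, 0 ≤ x → (∃ f ∈ F, x ≤ (f : ℤ) + α + β) →
      0 ≤ ∏ f ∈ F.filter (fun f : ℕ => -α - β ≤ (f : ℤ)), (x - (f : ℤ) - α - β))

/-- `U_{F-} = {f + α + β : f ∈ F, 1 ≤ f ≤ -β-1}`. -/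
def UFm (α β : ℤ) (F : Finset ℕ) : Finset ℤ :=
  (F.filter fun f : ℕ => (1 ≤ f ∧ (f : ℤ) ≤ -β - 1)).image fun f : ℕ => (f : ℤ) + α + β

/-- `U_{F+} = {f + α + β : f ∈ F, f ≥ -α-β}`. -/
def UFp (α β : ℤ) (F : Finset ℕ) : Finset ℤ :=
  (F.filter fun f : ℕ => -α - β ≤ (f : ℤ)).image fun f : ℕ => (f : ℤ) + α + β

/-- `U_F = U_{F-} ∪ U_{F+}`. -/
def UF (α β : ℤ) (F : Finset ℕ) : Finset ℤ := UFm α β F ∪ UFp α β F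

/-- The weight of the measure `ω_{α,β,N}^{M,F}` at the point `x`. -/
def wH (α β : ℤ) (N : ℕ) (M : ℕ → ℝ) (F : Finset ℕ) (x : ℕ) : ℝ :=
  genBinom ((α : ℝ) + (F.card : ℝ) + (x : ℝ)) x *
      genBinom ((β : ℝ) + (N : ℝ) - (x : ℝ)) (N - F.card - x) /
    (OmegaH α β (N : ℝ) M F (x : ℝ) * OmegaH α β (N : ℝ) M F ((x : ℝ) + 1))

/-- The weight `ω_{α,β;M,F}(x)` on `[-1,1]`. -/
def wJ (α β : ℤ) (M : ℕ → ℝ) (F : Finset ℕ) (x : ℝ) : ℝ :=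
  (1 - x) ^ (α + (F.card : ℤ)) * (1 + x) ^ (β + (F.card : ℤ)) / (OmegaJ α β M F x) ^ 2

/-- The measure on `[-1,1]` with density `ω_{α,β;M,F}`. -/
def jacobiMeasure (α β : ℤ) (M : ℕ → ℝ) (F : Finset ℕ) : Measure ℝ :=
  (volume.restrict (Set.Icc (-1 : ℝ) 1)).withDensity fun x => ENNReal.ofReal (wJ α β M F x)

/-- Mass of the dual Hahn measure `ρ_{b,a,N̂}` at `λ^{a,b}(x)`. -/
def rhoMass (a b Nh : ℤ) (x : ℕ) : ℝ :=
  (2 * (x : ℝ) + (a : ℝ) + (b : ℝ) + 1) * poch ((b : ℝ) + 1) x * poch (-(Nh : ℝ)) x *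
      (Nh.toNat.factorial : ℝ) /
    ((-1 : ℝ) ^ x * poch ((x : ℝ) + (a : ℝ) + (b : ℝ) + 1) (Nh + 1).toNat *
      poch ((a : ℝ) + 1) x * (x.factorial : ℝ))

/-- Mass of the measure `ν_{a,b,N̂}^{M}` at `λ^{a,b}(s)`. -/
def nuMass (a b Nh : ℤ) (M : ℕ → ℝ) (s : ℤ) : ℝ :=
  if -b ≤ s ∧ s ≤ -1 then
    (2 * (s : ℝ) + (a : ℝ) + (b : ℝ) + 1) * poch ((Nh : ℝ) + 1 - (s : ℝ)) (s + b).toNat /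
        poch ((Nh : ℝ) + (b : ℝ) + 1) (s + a + 1).toNat * M ((s + b).toNat)
  else if 0 ≤ s ∧ s ≤ Nh then
    poch ((Nh : ℝ) + 1) b.toNat ^ 2 / poch ((b : ℝ) + 1) (a - b).toNat * rhoMass a b Nh s.toNat /
      ∏ i ∈ Finset.range b.toNat, (((s : ℝ) + (a : ℝ) + (i : ℝ) + 1) * ((s : ℝ) + (b : ℝ) - (i : ℝ)))
  else 0

/-- `ζ_v` (defined for any integer `v` via `pochZ`). -/
def zetaH (α β : ℤ) (N : ℝ) (v : ℤ) : ℝ :=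
  pochZ (-N - (α : ℝ) - (β : ℝ)) v * poch ((v : ℝ) + 1) (-α).toNat *
    ((v - α - β).toNat.factorial : ℝ)

/-- `θ_v^M`. -/
def thetaM (β : ℤ) (M : ℕ → ℝ) (v : ℕ) : ℝ :=
  if (v : ℤ) ≤ -β - 1 then 1 - M ((-β - 1 - (v : ℤ)).toNat) else 1

/-- `τ_v = ∏_{u ∈ U_F} (λ^{a,b}(v+α+β) - λ^{a,b}(u))` with `a = -α`, `b = -β`. -/
def tauH (α β : ℤ) (F : Finset ℕ) (v : ℕ) : ℝ :=
  ∏ u ∈ UF α β F,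
    (lam ((-α : ℤ) : ℝ) ((-β : ℤ) : ℝ) ((v : ℝ) + (α : ℝ) + (β : ℝ)) -
      lam ((-α : ℤ) : ℝ) ((-β : ℤ) : ℝ) ((u : ℤ) : ℝ))

/-- `ξ_n`. -/
def xiH (α β : ℤ) (N : ℝ) (F : Finset ℕ) (n : ℕ) : ℝ :=
  pochZ (N - (n : ℝ) + 1) ((n : ℤ) + α + β) ^ (α + (F.card : ℤ) + 1) *
    ∏ j ∈ Finset.range (F.card + 1), poch (N - (n : ℝ) - (j : ℝ) + 1) j

/-- `κ_M`. -/
def kappaM (α β : ℤ) (N : ℝ) (M : ℕ → ℝ) (F : Finset ℕ) : ℝ :=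
  (∏ u ∈ UFm α β F, (1 - M ((-u + α - 1).toNat))) * ∏ u ∈ UF α β F, zetaH α β N u

/-- Entry `(i,j)` (0-based) of the determinant defining `q_n^{a,b,N̂;M,U_F}`. -/
def qEntry (α β : ℤ) (N : ℝ) (M : ℕ → ℝ) (F : Finset ℕ) (n : ℕ) (x : ℝ) (i j : ℕ) : ℝ :=
  if i = 0 then
    (-1 : ℝ) ^ j * dualHahnZ (((-α).toNat : ℝ)) (((-β).toNat : ℝ)) (N + (α : ℝ) + (β : ℝ))
      ((n : ℤ) - (-α).toNat + j) x
  else if h1 : i - 1 < (UFm α β F).card then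
    (-1 : ℝ) ^ j * dualHahnZ (((-α).toNat : ℝ)) (((-β).toNat : ℝ)) (N + (α : ℝ) + (β : ℝ))
      ((n : ℤ) - (-α).toNat + j)
      (lam (((-α).toNat : ℝ)) (((-β).toNat : ℝ)) ((elemOfZ (UFm α β F) ⟨i - 1, h1⟩ : ℤ) : ℝ))
  else if i - 1 - (UFm α β F).card < (-α).toNat then
    poch (((-α).toNat : ℝ) + ((-β).toNat : ℝ) + (N + (α : ℝ) + (β : ℝ)) - (n : ℝ) - (j : ℝ) + 1) j *
      Hhat α β (-2 - (N + (α : ℝ) + (β : ℝ))) M ((-β).toNat + (i - 1 - (UFm α β F).card))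
        (-(n : ℝ) + ((-α).toNat : ℝ) - (j : ℝ) - 1)
  else if h3 : i - 1 - (UFm α β F).card - (-α).toNat < (UFp α β F).card then
    (-1 : ℝ) ^ j * dualHahnZ (((-α).toNat : ℝ)) (((-β).toNat : ℝ)) (N + (α : ℝ) + (β : ℝ))
      ((n : ℤ) - (-α).toNat + j)
      (lam (((-α).toNat : ℝ)) (((-β).toNat : ℝ))
        ((elemOfZ (UFp α β F) ⟨i - 1 - (UFm α β F).card - (-α).toNat, h3⟩ : ℤ) : ℝ))
  else 0

/-- The Krall dual Hahn orthogonal polynomial `q_n^{a,b,N̂;M,U_F}(x)`. -/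
def qKrall (α β : ℤ) (N : ℝ) (M : ℕ → ℝ) (F : Finset ℕ) (n : ℕ) (x : ℝ) : ℝ :=
  Matrix.det (Matrix.of fun i j : Fin (1 + (UFm α β F).card + (-α).toNat + (UFp α β F).card) =>
      qEntry α β N M F n x (i : ℕ) (j : ℕ)) /
    ((-1 : ℝ) ^ ((n + (-α).toNat + (-β).toNat) * ((UF α β F).card + 1) +
        ((-α).toNat + (-β).toNat).choose 2 + ((-β).toNat).choose 2 + (-α).toNat) *
      ∏ u ∈ UF α β F, (x - lam (((-α).toNat : ℝ)) (((-β).toNat : ℝ)) ((u : ℤ) : ℝ)))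

/-- Row used in the renormalized determinant `P̄`: for `-α ≤ g ≤ -α-β-1` it is
`(M_{α+g} - 1) · P̂_g` written without the division by `M_{α+g} - 1`. -/
def PhatBarRow (α β : ℤ) (M : ℕ → ℝ) (g : ℕ) (x : ℝ) : ℝ :=
  if -α ≤ (g : ℤ) ∧ (g : ℤ) ≤ -α - β - 1 then
    (-1 : ℝ) ^ ((β : ℤ) + (g : ℤ)) *
      ((((g : ℤ) + α).toNat.factorial : ℝ) * (((g : ℤ) + β).toNat.factorial : ℝ) *
        ((-α - β - (g : ℤ) - 1).toNat.factorial : ℝ)) / (g.factorial : ℝ) *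
      (jacobiP (α : ℝ) (β : ℝ) ((-α - β - (g : ℤ) - 1).toNat) x +
        (M ((α + (g : ℤ)).toNat) - 1) * ((1 - x) / 2) ^ (-α).toNat *
          jacobiP (-(α : ℝ)) (β : ℝ) ((α + (g : ℤ)).toNat) x)
  else Phat α β M g x

/-- The renormalized exceptional Jacobi polynomial
`P̄_n^{α,β;M,F} = (∏_{i=0}^{-β-1} (M_i - 1)) · P_n^{α,β;M,F}`
(written so that the factors `M_i - 1` are distributed into the corresponding rows of the
determinant; this agrees with the product formula whenever all `M_i ≠ 1`). -/
def Pbar (α β : ℤ) (M : ℕ → ℝ) (F : Finset ℕ) (n : ℕ) (x : ℝ) : ℝ :=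
  (∏ i ∈ (Finset.range (-β).toNat).filter
      (fun i : ℕ => (((i : ℤ) - α).toNat ∉ F ∧ ((i : ℤ) - α).toNat ≠ n - uF F)), (M i - 1)) *
    Matrix.det (Matrix.of fun r j : Fin (F.card + 1) =>
      Fin.cases (iteratedDeriv (j : ℕ) (PhatBarRow α β M (n - uF F)) x)
        (fun k => iteratedDeriv (j : ℕ) (PhatBarRow α β M (elemOf F k)) x) r)

end ExceptionalHahnJacobi

/-!
Write `W(f₁, …, f_k)` for a Wronskian. `Ω` is the Wronskian of the polynomials `Phat f`, `f ∈ F`,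
and the exceptional polynomial of index `n` is `W(y, f₁, …, f_k)` with `y = Phat (n - u_F)`.

Every `Phat n` is an eigenvector of the Jacobi operator `D`, except for `n` in a resonant range,
where the eigenvalues of the degrees `n` and `m = -α - β - 1 - n` coincide; there `D - λ_n` maps
`Phat n` to a nonzero multiple of `Phat m`. In all cases `Phat n` has degree `n`, and if `F`
contains `{-β, …, -α - β - 1}` the span of the `Phat f`, `f ∈ F`, is stable under `D`. For such an
invariant space Crum's theorem applies: `y ↦ W(y, f₁, …, f_k)` intertwines `D` with a second order
operator which is formally symmetric for the weight `ω`. The endpoint terms vanish and, among the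
indices outside `F`, the eigenvalues are pairwise distinct, whence orthogonality.

For completeness, variation of parameters shows that every polynomial multiple of `Ω²` has the form
`W(y, f₁, …, f_k)` for a polynomial `y`, hence lies in the span of the exceptional polynomials. As
`Ω` has no zero on `[-1, 1]`, Weierstrass approximation makes these multiples dense.
-/

noncomputable section

namespace ExceptionalJacobi

open Polynomial

/-! ### Wronskians of polynomials -/

section Wronskian

variable {R : Type*} [CommRing R] {k : ℕ}

/-- The Wronskian matrix of a finite family of polynomials: row `i` lists the derivatives
of `f i`, starting with the zeroth. -/
def wronskianMatrix (f : Fin k → R[X]) : Matrix (Fin k) (Fin k) R[X] :=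
  Matrix.of fun i j => derivative^[(j : ℕ)] (f i)

/-- The Wronskian `W(f₀, …, f_{k-1})`; Mathlib's `Polynomial.wronskian` is the case `k = 2`. -/
def wronskianDet (f : Fin k → R[X]) : R[X] :=
  (wronskianMatrix f).det

/-- The minor of `W(y, f₀, …, f_{k-1})` belonging to the entry `y^{(j)}` of its first row. -/
def wronskianMinor (f : Fin k → R[X]) (j : Fin (k + 1)) : R[X] :=
  Matrix.det (Matrix.of fun i l : Fin k => derivative^[(j.succAbove l : ℕ)] (f i))

/-- The differential operator `y ↦ ∑ⱼ (-1)ʲ y^{(j)} N_j` of order `k`, signed as in a Laplace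
expansion. -/
def alternatingJetSum (N : Fin (k + 1) → R[X]) : R[X] →ₗ[R] R[X] where
  toFun y := ∑ j : Fin (k + 1), (-1) ^ (j : ℕ) * derivative^[(j : ℕ)] y * N j
  map_add' y z := by simp only [iterate_map_add, mul_add, add_mul, sum_add_distrib]
  map_smul' c y := by simp [iterate_derivative_smul, smul_sum]

lemma alternatingJetSum_apply (N : Fin (k + 1) → R[X]) (y : R[X]) :
    alternatingJetSum N y = ∑ j : Fin (k + 1), (-1) ^ (j : ℕ) * derivative^[(j : ℕ)] y * N j :=
  rfl

lemma derivative_alternatingJetSum (N : Fin (k + 1) → R[X]) (y : R[X]) :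
    derivative (alternatingJetSum N y) =
      alternatingJetSum N (derivative y) + alternatingJetSum (fun j => derivative (N j)) y := by
  have derivative_neg_one_pow (n : ℕ) : derivative ((-1 : R[X]) ^ n) = 0 := by
    rw [show (-1 : R[X]) ^ n = C ((-1) ^ n) by simp, derivative_C]
  simp only [alternatingJetSum_apply, derivative_sum, derivative_mul, derivative_neg_one_pow,
    ← Function.iterate_succ_apply', Function.iterate_succ_apply, ← sum_add_distrib]
  exact sum_congr rfl fun j _ => by ring

lemma eval_alternatingJetSum_of_jet_eq_zero (N : Fin (k + 1) → R[X]) {x : R} {y : R[X]}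
    (hy : ∀ j < k, eval x (derivative^[j] y) = 0) :
    eval x (alternatingJetSum N y) =
      (-1) ^ k * eval x (derivative^[k] y) * eval x (N (Fin.last k)) := by
  have lower (j : Fin k) : eval x (derivative^[(j : ℕ)] y) = 0 := hy j j.2
  simp [alternatingJetSum_apply, Fin.sum_univ_castSucc, eval_finsetSum, lower]

/-- The differential operator `y ↦ W(y, f₀, …, f_{k-1})`. -/
def wronskianMap (f : Fin k → R[X]) : R[X] →ₗ[R] R[X] :=
  alternatingJetSum (wronskianMinor f)

lemma wronskianMap_eq_det (f : Fin k → R[X]) (y : R[X]) :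
    wronskianMap f y = Matrix.det (Matrix.of fun i j : Fin (k + 1) =>
      (Fin.cases (derivative^[(j : ℕ)] y) (fun l => derivative^[(j : ℕ)] (f l)) i : R[X])) := by
  rw [Matrix.det_succ_row_zero]
  rfl

lemma wronskianMap_self (f : Fin k → R[X]) (i : Fin k) : wronskianMap f (f i) = 0 := by
  rw [wronskianMap_eq_det]
  exact Matrix.det_zero_of_row_eq (Fin.succ_ne_zero i).symm (by ext1 j; simp)

lemma wronskianMap_eq_zero_of_mem_span {f : Fin k → R[X]} {y : R[X]}
    (hy : y ∈ Submodule.span R (Set.range f)) : wronskianMap f y = 0 := by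
  have span_le_ker : Submodule.span R (Set.range f) ≤ LinearMap.ker (wronskianMap f) := by
    rw [Submodule.span_le]
    rintro _ ⟨i, rfl⟩
    exact wronskianMap_self f i
  exact span_le_ker hy

lemma wronskianMinor_last (f : Fin k → R[X]) : wronskianMinor f (Fin.last k) = wronskianDet f := by
  simp [wronskianMinor, wronskianDet, wronskianMatrix]

lemma derivative_det {n : Type*} [Fintype n] [DecidableEq n] (A : Matrix n n R[X]) :
    derivative A.det = ∑ j, (A.updateCol j fun i => derivative (A i j)).det := by
  simp only [Matrix.det_apply, derivative_sum]
  rw [sum_comm]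
  refine sum_congr rfl fun σ _ => ?_
  have derivative_units_smul (u : ℤˣ) (p : R[X]) : derivative (u • p) = u • derivative p := by
    rcases Int.units_eq_one_or u with h | h <;> simp [h]
  rw [← smul_sum, derivative_units_smul, derivative_prod_finset]
  congr 1
  refine sum_congr rfl fun j _ => ?_
  rw [← mul_prod_erase _ _ (mem_univ j), mul_comm]
  congr 1
  · simp
  · exact prod_congr rfl fun l hl => by rw [Matrix.updateCol_ne (ne_of_mem_erase hl)]

lemma derivative_wronskianDet (f : Fin (k + 1) → R[X]) :
    derivative (wronskianDet f) = wronskianMinor f (Fin.last k).castSucc := by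
  rw [wronskianDet, derivative_det, sum_eq_single (Fin.last k)]
  · rw [wronskianMinor]
    congr 1
    ext1 i l
    refine Fin.lastCases ?_ (fun l => ?_) l
    · simp [wronskianMatrix, Function.iterate_succ_apply']
    · rw [Matrix.updateCol_ne (Fin.castSucc_lt_last l).ne]
      simp [wronskianMatrix, Fin.succAbove, Fin.lt_def]
  · intro j _ hj
    obtain ⟨j, rfl⟩ := Fin.exists_castSucc_eq.mpr hj
    refine Matrix.det_zero_of_column_eq (i := j.castSucc) (j := j.succ)
      Fin.castSucc_lt_succ.ne fun i => ?_
    rw [Matrix.updateCol_ne Fin.castSucc_lt_succ.ne']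
    simp [wronskianMatrix, Function.iterate_succ_apply']
  · simp

lemma det_eval_wronskianMatrix (f : Fin k → R[X]) (x : R) :
    (Matrix.of fun i j => eval x (wronskianMatrix f i j)).det = eval x (wronskianDet f) := by
  rw [wronskianDet, ← coe_evalRingHom, RingHom.map_det]
  rfl

lemma eval_wronskianMap_of_jet_eq_zero (f : Fin k → R[X]) {x : R} {y : R[X]}
    (hy : ∀ j, j + 1 < k → eval x (derivative^[j] y) = 0) :
    eval x (wronskianMap f y) = (-1) ^ k *
      (eval x (derivative^[k] y) * eval x (wronskianDet f) -
        eval x (derivative^[k - 1] y) * eval x (derivative (wronskianDet f))) := by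
  cases k with
  | zero =>
    simp [wronskianMap, alternatingJetSum_apply, wronskianMinor, wronskianDet, wronskianMatrix]
  | succ m =>
    have lower (j : Fin m) : eval x (derivative^[(j : ℕ)] y) = 0 := hy j (by omega)
    simp only [wronskianMap, alternatingJetSum_apply, Fin.sum_univ_castSucc, eval_add,
      eval_finsetSum, eval_mul]
    simp only [Fin.val_castSucc, Fin.val_last, eval_pow, eval_neg, eval_one, lower, mul_zero,
      zero_mul, sum_const_zero, zero_add, wronskianMinor_last, derivative_wronskianDet,
      Nat.add_sub_cancel]
    ring

end Wronskian

/-! ### Darboux–Crum intertwining -/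

section SturmOperator

variable {R : Type*} [CommRing R]

/-- The second order differential operator `y ↦ p y'' + q y'`. -/
def sturmOperator (p q : R[X]) : R[X] →ₗ[R] R[X] :=
  LinearMap.mulLeft R p ∘ₗ derivative ∘ₗ derivative + LinearMap.mulLeft R q ∘ₗ derivative

lemma sturmOperator_apply (p q y : R[X]) :
    sturmOperator p q y = p * derivative (derivative y) + q * derivative y :=
  rfl

lemma sturmOperator_mul (p q g y : R[X]) :
    sturmOperator p q (g * y) =
      g * sturmOperator p q y + 2 * p * derivative g * derivative y + sturmOperator p q g * y := by
  simp only [sturmOperator_apply, derivative_mul, derivative_add]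
  ring

lemma eval_iterate_derivative_mul_of_jet_eq_zero (p : R[X]) {g : R[X]} {x : R} {n : ℕ}
    (hg : ∀ j < n, eval x (derivative^[j] g) = 0) :
    eval x (derivative^[n] (p * g)) = eval x p * eval x (derivative^[n] g) := by
  rw [iterate_derivative_mul, sum_range_succ, eval_add, eval_finsetSum,
    sum_eq_zero fun j hj => by simp [hg j (mem_range.mp hj)]]
  simp

lemma eval_iterate_derivative_succ_mul_of_jet_eq_zero (p : R[X]) {g : R[X]} {x : R} {n : ℕ}
    (hg : ∀ j < n, eval x (derivative^[j] g) = 0) :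
    eval x (derivative^[n + 1] (p * g)) = eval x p * eval x (derivative^[n + 1] g) +
      (n + 1) * eval x (derivative p) * eval x (derivative^[n] g) := by
  rw [iterate_derivative_mul, sum_range_succ, sum_range_succ, eval_add, eval_add, eval_finsetSum,
    sum_eq_zero fun j hj => by simp [hg j (mem_range.mp hj)]]
  simp only [Nat.choose_succ_self_right, Nat.choose_self, add_tsub_cancel_left, tsub_self,
    Function.iterate_one, Function.iterate_zero, id_eq, nsmul_eq_mul, Nat.cast_add, Nat.cast_one,
    eval_mul, eval_add, eval_natCast, eval_one, one_smul]
  ring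

lemma eval_iterate_derivative_sturmOperator (p q : R[X]) {y : R[X]} {x : R} {n : ℕ}
    (hy : ∀ j ≤ n, eval x (derivative^[j + 1] y) = 0) :
    eval x (derivative^[n] (sturmOperator p q y)) =
        eval x p * eval x (derivative^[n + 2] y) ∧
      eval x (derivative^[n + 1] (sturmOperator p q y)) =
        eval x p * eval x (derivative^[n + 3] y) +
          ((n + 1) * eval x (derivative p) + eval x q) * eval x (derivative^[n + 2] y) := by
  have jet_second (j : ℕ) (hj : j < n) : eval x (derivative^[j] (derivative^[2] y)) = 0 := by
    rw [← Function.iterate_add_apply]; exact hy (j + 1) hj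
  have jet_first (j : ℕ) (hj : j < n + 1) : eval x (derivative^[j] (derivative y)) = 0 :=
    hy j (Nat.lt_succ_iff.mp hj)
  rw [sturmOperator_apply, show derivative (derivative y) = derivative^[2] y from rfl]
  constructor
  · rw [iterate_map_add, eval_add, eval_iterate_derivative_mul_of_jet_eq_zero p jet_second,
      eval_iterate_derivative_mul_of_jet_eq_zero q fun j hj =>
        jet_first j (hj.trans n.lt_succ_self),
      jet_first n n.lt_succ_self, ← Function.iterate_add_apply, mul_zero, add_zero]
  · rw [iterate_map_add, eval_add, eval_iterate_derivative_succ_mul_of_jet_eq_zero p jet_second,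
      eval_iterate_derivative_mul_of_jet_eq_zero q jet_first, ← Function.iterate_add_apply,
      ← Function.iterate_add_apply, ← Function.iterate_succ_apply]
    ring

end SturmOperator

section Crum

variable {R : Type*} [CommRing R] {k : ℕ} {x : R} {y : R[X]}

lemma eval_derivative_wronskianMap (f : Fin k → R[X])
    (hy : ∀ j ≤ k, eval x (derivative^[j] y) = 0) :
    eval x (derivative (wronskianMap f y)) = eval x (wronskianMap f (derivative y)) := by
  rw [wronskianMap, derivative_alternatingJetSum, eval_add,
    eval_alternatingJetSum_of_jet_eq_zero _ fun j hj => hy j hj.le, hy k le_rfl]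
  ring

lemma eval_derivative_derivative_wronskianMap (f : Fin k → R[X])
    (hy : ∀ j ≤ k, eval x (derivative^[j] y) = 0) :
    eval x (derivative (derivative (wronskianMap f y))) =
      eval x (wronskianMap f (derivative (derivative y))) +
        2 * (-1) ^ k * eval x (derivative^[k + 1] y) * eval x (derivative (wronskianDet f)) := by
  simp only [wronskianMap, derivative_alternatingJetSum, derivative_add, eval_add]
  rw [eval_alternatingJetSum_of_jet_eq_zero _ fun j hj => hy (j + 1) hj,
    eval_alternatingJetSum_of_jet_eq_zero _ fun j hj => hy j hj.le, hy k le_rfl,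
    wronskianMinor_last, ← Function.iterate_succ_apply]
  ring

/-- Vanishing of the `k`-jet leaves only the two top derivatives of `y`, so both sides are
explicit. -/
lemma eval_wronskianMap_sturmOperator_of_jet_eq_zero (p q : R[X]) (f : Fin k → R[X])
    (hy : ∀ j ≤ k, eval x (derivative^[j] y) = 0) :
    eval x (wronskianDet f * wronskianMap f (sturmOperator p q y)) =
      eval x (p * wronskianDet f * derivative (derivative (wronskianMap f y)) +
        ((q + k * derivative p) * wronskianDet f - 2 * p * derivative (wronskianDet f)) *
          derivative (wronskianMap f y)) := by
  simp only [eval_mul, eval_add, eval_sub, eval_natCast, eval_ofNat,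
    eval_derivative_derivative_wronskianMap f hy, eval_derivative_wronskianMap f hy]
  cases k with
  | zero =>
    simp [wronskianMap, alternatingJetSum_apply, wronskianMinor, wronskianDet, wronskianMatrix,
      sturmOperator_apply]
  | succ m =>
    obtain ⟨jet_m, jet_succ⟩ := eval_iterate_derivative_sturmOperator p q
      (y := y) (x := x) (n := m) fun j hj => hy _ (Nat.succ_le_succ hj)
    have jet_lower (j : ℕ) (hj : j + 1 < m + 1) :
        eval x (derivative^[j] (sturmOperator p q y)) = 0 := by
      rw [(eval_iterate_derivative_sturmOperator p q fun i hi => hy (i + 1) (by omega)).1,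
        hy (j + 2) (by omega), mul_zero]
    rw [eval_wronskianMap_of_jet_eq_zero f jet_lower,
      eval_wronskianMap_of_jet_eq_zero f fun j hj => hy (j + 1) (by omega),
      eval_wronskianMap_of_jet_eq_zero f fun j hj => hy (j + 2) (by omega), jet_succ,
      Nat.add_sub_cancel, jet_m]
    simp only [← Function.iterate_succ_apply, hy (m + 1) le_rfl]
    push_cast
    ring

end Crum

section CrumField

variable {K : Type*} [Field K] {k : ℕ} {f : Fin k → K[X]} {x : K}

lemma exists_mem_span_jet_eq (hx : eval x (wronskianDet f) ≠ 0) (y : K[X]) :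
    ∃ z ∈ Submodule.span K (Set.range f),
      ∀ j < k, eval x (derivative^[j] (y - z)) = 0 := by
  have jets_surjective : Function.Surjective fun v : Fin k → K =>
      Matrix.vecMul v (Matrix.of fun i j => eval x (wronskianMatrix f i j)) := by
    rw [Matrix.vecMul_surjective_iff_isUnit, Matrix.isUnit_iff_isUnit_det,
      det_eval_wronskianMatrix]
    exact hx.isUnit
  obtain ⟨c, hc⟩ := jets_surjective fun j => eval x (derivative^[(j : ℕ)] y)
  refine ⟨∑ i, c i • f i,
    Submodule.sum_mem _ fun i _ => Submodule.smul_mem _ _ (Submodule.subset_span ⟨i, rfl⟩),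
    fun j hj => ?_⟩
  have jet_eq := congrFun hc ⟨j, hj⟩
  simp only [Matrix.vecMul, dotProduct, wronskianMatrix, Matrix.of_apply] at jet_eq
  simp [iterate_derivative_sum, iterate_derivative_smul, eval_finsetSum, jet_eq]

lemma exists_eq_mul_eval_wronskianMap (hx : eval x (wronskianDet f) ≠ 0) {L : K[X] →ₗ[K] K}
    (hLf : ∀ i, L (f i) = 0)
    (hL : ∀ y, (∀ j ≤ k, eval x (derivative^[j] y) = 0) → L y = 0) :
    ∃ c, ∀ y, L y = c * eval x (wronskianMap f y) := by
  have ker_le : LinearMap.ker (leval x ∘ₗ wronskianMap f) ≤ LinearMap.ker L := by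
    intro y hy
    obtain ⟨z, hz, hyz⟩ := exists_mem_span_jet_eq hx y
    have hLz : L z = 0 :=
      (Submodule.span_le.mpr (by rintro _ ⟨i, rfl⟩; exact hLf i) :
        Submodule.span K (Set.range f) ≤ LinearMap.ker L) hz
    have wronskian_sub : eval x (wronskianMap f (y - z)) = 0 := by
      rw [map_sub, wronskianMap_eq_zero_of_mem_span hz, sub_zero]
      exact hy
    have top_jet : eval x (derivative^[k] (y - z)) = 0 := by
      rw [wronskianMap, eval_alternatingJetSum_of_jet_eq_zero _ hyz, wronskianMinor_last]
        at wronskian_sub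
      simpa [hx] using wronskian_sub
    have hLyz := hL (y - z) fun j hj => hj.lt_or_eq.elim (hyz j) (by rintro rfl; exact top_jet)
    rw [LinearMap.mem_ker, ← sub_add_cancel y z, map_add, hLyz, hLz, add_zero]
  obtain ⟨c, rfl⟩ := Submodule.mem_span_singleton.mp <| by
    simpa using mem_span_of_iInf_ker_le_ker (L := fun _ : Unit => leval x ∘ₗ wronskianMap f)
      (K := L) (by simpa using ker_le)
  exact ⟨c, fun y => rfl⟩

/-- The difference of the two sides without the last term is a functional of `y` that kills the
`f i` and depends only on the `k`-jet of `y` at `x`, hence a multiple of `W(y, f)(x)`. -/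
theorem exists_wronskianMap_sturmOperator_eq {p q : K[X]}
    (hf : ∀ i, sturmOperator p q (f i) ∈ Submodule.span K (Set.range f))
    (hx : eval x (wronskianDet f) ≠ 0) :
    ∃ c, ∀ y, eval x (wronskianDet f * wronskianMap f (sturmOperator p q y)) =
      eval x (p * wronskianDet f * derivative (derivative (wronskianMap f y)) +
        ((q + k * derivative p) * wronskianDet f - 2 * p * derivative (wronskianDet f)) *
          derivative (wronskianMap f y)) + c * eval x (wronskianMap f y) := by
  let W := wronskianMap f
  let L : K[X] →ₗ[K] K := leval x ∘ₗ (LinearMap.mulLeft K (wronskianDet f) ∘ₗ W ∘ₗ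
    sturmOperator p q - sturmOperator (p * wronskianDet f)
      ((q + k * derivative p) * wronskianDet f - 2 * p * derivative (wronskianDet f)) ∘ₗ W)
  obtain ⟨c, hc⟩ := exists_eq_mul_eval_wronskianMap (L := L) hx
    (fun i => by simp [L, W, wronskianMap_self, wronskianMap_eq_zero_of_mem_span (hf i)])
    (fun y hy => (eval_sub ..).trans <| sub_eq_zero.mpr <|
      eval_wronskianMap_sturmOperator_of_jet_eq_zero p q f hy)
  refine ⟨c, fun y => ?_⟩
  rw [← hc y, ← sub_eq_iff_eq_add', ← eval_sub]
  rfl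

end CrumField

/-! ### Variation of parameters -/

section VariationOfParameters

lemma exists_derivative_eq {K : Type*} [Field K] [CharZero K] (p : K[X]) :
    ∃ q : K[X], derivative q = p := by
  induction p using Polynomial.induction_on' with
  | add p q hp hq =>
    obtain ⟨p', rfl⟩ := hp
    obtain ⟨q', rfl⟩ := hq
    exact ⟨p' + q', derivative_add⟩
  | monomial n a =>
    refine ⟨monomial (n + 1) (a / (n + 1)), ?_⟩
    rw [derivative_monomial, Nat.add_sub_cancel, Nat.cast_succ,
      div_mul_cancel₀ _ (Nat.cast_add_one_ne_zero n)]

variable {R : Type*} [CommRing R]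

lemma iterate_derivative_sum_mul {ι : Type*} (s : Finset ι) (c f : ι → R[X]) (n : ℕ)
    (hc : ∀ j < n, ∑ i ∈ s, derivative (c i) * derivative^[j] (f i) = 0) :
    derivative^[n] (∑ i ∈ s, c i * f i) = ∑ i ∈ s, c i * derivative^[n] (f i) := by
  induction n with
  | zero => rfl
  | succ n ih =>
    rw [Function.iterate_succ_apply', ih fun j hj => hc j (hj.trans n.lt_succ_self),
      derivative_sum]
    simp only [derivative_mul, sum_add_distrib, hc n n.lt_succ_self, zero_add,
      Function.iterate_succ_apply']

lemma wronskianMap_sum_mul {m : ℕ} (f c : Fin (m + 1) → R[X]) (g : R[X])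
    (hlow : ∀ j < m, ∑ i, derivative (c i) * derivative^[j] (f i) = 0)
    (htop : ∑ i, derivative (c i) * derivative^[m] (f i) = g) :
    wronskianMap f (∑ i, c i * f i) = (-1) ^ (m + 1) * g * wronskianDet f := by
  have jet_low (j : Fin (m + 1)) :
      derivative^[(j : ℕ)] (∑ i, c i * f i) = ∑ i, c i * derivative^[(j : ℕ)] (f i) :=
    iterate_derivative_sum_mul _ c f j fun l hl => hlow l (by omega)
  have jet_top : derivative^[m + 1] (∑ i, c i * f i) =
      g + ∑ i, c i * derivative^[m + 1] (f i) := by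
    rw [Function.iterate_succ_apply', iterate_derivative_sum_mul _ c f m hlow, derivative_sum]
    simp only [derivative_mul, sum_add_distrib, htop, Function.iterate_succ_apply']
  have vanishing : ∑ j : Fin (m + 2), (-1) ^ (j : ℕ) *
      (∑ i, c i * derivative^[(j : ℕ)] (f i)) * wronskianMinor f j = 0 := by
    calc _ = ∑ i, c i * wronskianMap f (f i) := by
          simp only [wronskianMap, alternatingJetSum_apply, mul_sum, sum_mul]
          rw [sum_comm]
          exact sum_congr rfl fun i _ => sum_congr rfl fun j _ => by ring
      _ = 0 := sum_eq_zero fun i _ => by rw [wronskianMap_self, mul_zero]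
  rw [Fin.sum_univ_castSucc, wronskianMinor_last] at vanishing
  rw [wronskianMap, alternatingJetSum_apply, Fin.sum_univ_castSucc, wronskianMinor_last]
  simp only [Fin.val_castSucc, Fin.val_last, jet_low, jet_top] at vanishing ⊢
  linear_combination vanishing

/-- Variation of parameters: `y = ∑ cᵢ fᵢ` where the `cᵢ'` are read off the adjugate of the
Wronskian matrix. -/
theorem exists_wronskianMap_eq {K : Type*} [Field K] [CharZero K] {k : ℕ} (f : Fin k → K[X])
    (h : K[X]) : ∃ y, wronskianMap f y = wronskianDet f ^ 2 * h := by
  cases k with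
  | zero => exact ⟨h, by simp [wronskianMap, alternatingJetSum_apply, wronskianMinor, wronskianDet]⟩
  | succ m =>
    let A := wronskianMatrix f
    choose c hc using fun i =>
      exists_derivative_eq ((-1) ^ (m + 1) * h * A.adjugate (Fin.last m) i)
    have adjugate_row (j : Fin (m + 1)) : ∑ i, derivative (c i) * derivative^[(j : ℕ)] (f i) =
        (-1) ^ (m + 1) * h * (wronskianDet f • (1 : Matrix (Fin (m + 1)) (Fin (m + 1)) K[X]))
          (Fin.last m) j := by
      rw [wronskianDet, ← Matrix.adjugate_mul, Matrix.mul_apply, mul_sum]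
      exact sum_congr rfl fun i _ => by rw [hc, mul_assoc]; rfl
    refine ⟨∑ i, c i * f i, ?_⟩
    rw [wronskianMap_sum_mul f c ((-1) ^ (m + 1) * h * wronskianDet f)
      (fun j hj => (adjugate_row ⟨j, by omega⟩).trans (by simp [Fin.ext_iff, hj.ne']))
      ((adjugate_row (Fin.last m)).trans (by simp))]
    linear_combination h * wronskianDet f ^ 2 * (even_two_mul (m + 1)).neg_one_pow (α := K[X])

end VariationOfParameters

/-! ### Orthogonality of Darboux–Crum transforms -/

section Orthogonality

/-- Lagrange's identity: `(l₁ - l₂) Y Z w` is the derivative of `p w (Y' Z - Y Z')`. -/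
lemma integral_mul_mul_eq_zero_of_sturmLiouville {u v l₁ l₂ : ℝ} (hl : l₁ ≠ l₂)
    {p r κ w Y Y' Y'' Z Z' Z'' : ℝ → ℝ} (hw : ContinuousOn w (Set.uIcc u v))
    (hpw : ∀ x ∈ Set.uIcc u v, HasDerivAt (fun x => p x * w x) (r x * w x) x)
    (hu : p u * w u = 0) (hv : p v * w v = 0)
    (hY : ∀ x ∈ Set.uIcc u v, HasDerivAt Y (Y' x) x)
    (hY' : ∀ x ∈ Set.uIcc u v, HasDerivAt Y' (Y'' x) x)
    (hZ : ∀ x ∈ Set.uIcc u v, HasDerivAt Z (Z' x) x)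
    (hZ' : ∀ x ∈ Set.uIcc u v, HasDerivAt Z' (Z'' x) x)
    (hYeq : ∀ x ∈ Set.uIcc u v, p x * Y'' x + r x * Y' x + κ x * Y x = l₁ * Y x)
    (hZeq : ∀ x ∈ Set.uIcc u v, p x * Z'' x + r x * Z' x + κ x * Z x = l₂ * Z x) :
    ∫ x in u..v, Y x * Z x * w x = 0 := by
  have lagrange (x : ℝ) (hx : x ∈ Set.uIcc u v) : HasDerivAt
      (fun x => p x * w x * (Y' x * Z x - Y x * Z' x)) ((l₁ - l₂) * (Y x * Z x * w x)) x := by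
    refine ((hpw x hx).mul (((hY' x hx).mul (hZ x hx)).sub ((hY x hx).mul (hZ' x hx)))).congr_deriv
      ?_
    simp only [Pi.mul_apply, Pi.sub_apply]
    linear_combination w x * Z x * hYeq x hx - w x * Y x * hZeq x hx
  have integrand_continuousOn :
      ContinuousOn (fun x => (l₁ - l₂) * (Y x * Z x * w x)) (Set.uIcc u v) :=
    continuousOn_const.mul <| (ContinuousOn.mul
      (fun x hx => (hY x hx).continuousAt.continuousWithinAt)
      (fun x hx => (hZ x hx).continuousAt.continuousWithinAt)).mul hw
  have integral_scaled : (l₁ - l₂) * ∫ x in u..v, Y x * Z x * w x = 0 := by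
    rw [← intervalIntegral.integral_const_mul,
      intervalIntegral.integral_eq_sub_of_hasDerivAt lagrange
        integrand_continuousOn.intervalIntegrable]
    simp [hu, hv]
  exact (mul_eq_zero.mp integral_scaled).resolve_left (sub_ne_zero.mpr hl)

theorem integral_wronskianMap_mul_eq_zero {k : ℕ} {f : Fin k → ℝ[X]} {p q y z : ℝ[X]}
    {u v l₁ l₂ : ℝ} {w : ℝ → ℝ} (hl : l₁ ≠ l₂)
    (hf : ∀ i, sturmOperator p q (f i) ∈ Submodule.span ℝ (Set.range f))
    (hΩ : ∀ x ∈ Set.uIcc u v, eval x (wronskianDet f) ≠ 0)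
    (hw : ContinuousOn w (Set.uIcc u v))
    (hpw : ∀ x ∈ Set.uIcc u v, HasDerivAt (fun x => eval x p * w x)
      ((eval x (q + k * derivative p) -
        2 * eval x p * eval x (derivative (wronskianDet f)) / eval x (wronskianDet f)) * w x) x)
    (hu : eval u p * w u = 0) (hv : eval v p * w v = 0)
    (hy : sturmOperator p q y = l₁ • y) (hz : sturmOperator p q z = l₂ • z) :
    ∫ x in u..v, eval x (wronskianMap f y) * eval x (wronskianMap f z) * w x = 0 := by
  choose! c hc using fun x hx => exists_wronskianMap_sturmOperator_eq hf (hΩ x hx)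
  have transformed_equation (t : ℝ[X]) (l : ℝ) (ht : sturmOperator p q t = l • t)
      (x : ℝ) (hx : x ∈ Set.uIcc u v) :
      eval x p * eval x (derivative (derivative (wronskianMap f t))) +
        (eval x (q + k * derivative p) -
          2 * eval x p * eval x (derivative (wronskianDet f)) / eval x (wronskianDet f)) *
          eval x (derivative (wronskianMap f t)) +
        c x / eval x (wronskianDet f) * eval x (wronskianMap f t) =
      l * eval x (wronskianMap f t) := by
    have hΩx := hΩ x hx
    have crum := hc x hx t
    rw [ht, map_smul] at crum
    simp only [eval_mul, eval_add, eval_sub, eval_smul, eval_ofNat, smul_eq_mul] at crum ⊢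
    field_simp
    linear_combination -crum
  exact integral_mul_mul_eq_zero_of_sturmLiouville hl hw hpw hu hv
    (fun x _ => (wronskianMap f y).hasDerivAt x) (fun x _ => (derivative _).hasDerivAt x)
    (fun x _ => (wronskianMap f z).hasDerivAt x) (fun x _ => (derivative _).hasDerivAt x)
    (transformed_equation y l₁ hy) (transformed_equation z l₂ hz)

end Orthogonality

/-! ### Weighted polynomial approximation -/

section Approximation

lemma exists_polynomial_mul_near {u v δ : ℝ} {w φ : ℝ → ℝ} (hw : ContinuousOn w (Set.Icc u v))
    (hw0 : ∀ x ∈ Set.Icc u v, w x ≠ 0) (hφ : ContinuousOn φ (Set.Icc u v)) (hδ : 0 < δ) :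
    ∃ h : ℝ[X], ∀ x ∈ Set.Icc u v, ‖φ x - w x * eval x h‖ ≤ δ := by
  obtain ⟨B, hB⟩ := isCompact_Icc.exists_bound_of_continuousOn hw
  have hB_pos : 0 < |B| + 1 := by positivity
  obtain ⟨h, hh⟩ := exists_polynomial_near_of_continuousOn u v _ (hφ.div hw hw0) _
    (div_pos hδ hB_pos)
  refine ⟨h, fun x hx => ?_⟩
  have hwx := hw0 x hx
  calc ‖φ x - w x * eval x h‖ = ‖w x‖ * |eval x h - φ x / w x| := by
        rw [← Real.norm_eq_abs, ← norm_mul, ← norm_neg]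
        congr 1
        field_simp
        ring
    _ ≤ (|B| + 1) * (δ / (|B| + 1)) := by
        gcongr
        · linarith [hB x hx, le_abs_self B]
        · exact (hh x hx).le
    _ = δ := mul_div_cancel₀ δ hB_pos.ne'

theorem exists_eLpNorm_sub_mul_polynomial_le {μ : Measure ℝ} [IsFiniteMeasure μ] {u v : ℝ}
    (hμ : ∀ᵐ x ∂μ, x ∈ Set.Icc u v) {w : ℝ → ℝ} (hw : Continuous w)
    (hw0 : ∀ x ∈ Set.Icc u v, w x ≠ 0) {p : ENNReal} (hp1 : 1 ≤ p) (hp : p ≠ ⊤) {g : ℝ → ℝ}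
    (hg : MemLp g p μ) {ε : ENNReal} (hε : ε ≠ 0) :
    ∃ h : ℝ[X], eLpNorm (fun x => g x - w x * eval x h) p μ ≤ ε := by
  have hε2 : ε / 2 ≠ 0 := (ENNReal.half_pos hε).ne'
  obtain ⟨φ, hgφ, hφ⟩ := hg.exists_boundedContinuous_eLpNorm_sub_le hp hε2
  have total_mass_ne_top : μ Set.univ ^ p.toReal⁻¹ ≠ ⊤ :=
    ENNReal.rpow_ne_top_of_nonneg (by positivity) (measure_ne_top _ _)
  obtain ⟨δ, hδ, hδε⟩ := ENNReal.exists_nnreal_pos_mul_lt total_mass_ne_top hε2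
  obtain ⟨h, hh⟩ := exists_polynomial_mul_near hw.continuousOn hw0 φ.continuous.continuousOn
    (NNReal.coe_pos.mpr hδ)
  have uniform_part : eLpNorm (fun x => φ x - w x * eval x h) p μ ≤ ε / 2 :=
    calc _ ≤ μ Set.univ ^ p.toReal⁻¹ * ENNReal.ofReal δ :=
          eLpNorm_le_of_ae_bound (hμ.mono hh)
      _ ≤ ε / 2 := by rw [ENNReal.ofReal_coe_nnreal, mul_comm]; exact hδε.le
  have φ_sub_measurable : AEStronglyMeasurable (fun x => φ x - w x * eval x h) μ :=
    (by fun_prop : Continuous fun x => φ x - w x * eval x h).aestronglyMeasurable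
  refine ⟨h, ?_⟩
  calc eLpNorm (fun x => g x - w x * eval x h) p μ
      = eLpNorm ((g - ⇑φ) + fun x => φ x - w x * eval x h) p μ := by
        congr 1
        ext x
        simp
    _ ≤ ε / 2 + ε / 2 :=
        (eLpNorm_add_le (hg.1.sub hφ.1) φ_sub_measurable hp1).trans (add_le_add hgφ uniform_part)
    _ = ε := ENNReal.add_halves ε

end Approximation

/-! ### The Jacobi operator -/

section JacobiOperator

/-- The Jacobi operator `(1 - X²) y'' + (b - a - (a + b + 2) X) y'`. -/
def jacobiOperator (a b : ℝ) : ℝ[X] →ₗ[ℝ] ℝ[X] :=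
  sturmOperator (1 - X ^ 2) (C (b - a) - C (a + b + 2) * X)

/-- The eigenvalue of the Jacobi operator on polynomials of degree `n`. -/
def jacobiEigenvalue (a b : ℝ) (n : ℕ) : ℝ := -(n * (n + a + b + 1))

variable {a b : ℝ} {n m : ℕ} {y z : ℝ[X]}

lemma jacobiEigenvalue_eq_iff :
    jacobiEigenvalue a b n = jacobiEigenvalue a b m ↔ n = m ∨ (n + m + a + b + 1 : ℝ) = 0 := by
  rw [← sub_eq_zero, ← Nat.cast_inj (R := ℝ), ← sub_eq_zero (a := (n : ℝ)), ← mul_eq_zero,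
    ← neg_eq_zero]
  simp only [jacobiEigenvalue]
  ring_nf

lemma coeff_jacobiOperator (a b : ℝ) (y : ℝ[X]) (j : ℕ) :
    (jacobiOperator a b y).coeff j = (j + 2) * (j + 1) * y.coeff (j + 2) +
      (b - a) * (j + 1) * y.coeff (j + 1) + jacobiEigenvalue a b j * y.coeff j := by
  rw [jacobiOperator, sturmOperator_apply, jacobiEigenvalue, sub_mul, one_mul, sub_mul,
    mul_assoc (C (a + b + 2))]
  simp only [coeff_add, coeff_sub, coeff_C_mul, coeff_derivative]
  rcases j with _ | _ | j
  · simp only [zero_add, Nat.cast_one, Nat.cast_zero, mul_coeff_zero, coeff_X_pow,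
      OfNat.zero_ne_ofNat, ↓reduceIte, coeff_X_zero]
    ring
  · simp only [zero_add, Nat.reduceAdd, Nat.cast_ofNat, Nat.cast_one, coeff_X_pow_mul',
      Nat.not_ofNat_le_one, ↓reduceIte, coeff_X_mul, coeff_derivative]
    ring
  · rw [coeff_X_pow_mul, coeff_X_mul]
    simp only [coeff_derivative]
    push_cast
    ring

lemma coeff_jacobiOperator_of_natDegree_le (hy : y.natDegree ≤ n) :
    (jacobiOperator a b y).coeff n = jacobiEigenvalue a b n * y.coeff n := by
  rw [coeff_jacobiOperator, coeff_eq_zero_of_natDegree_lt (by lia : y.natDegree < n + 2),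
    coeff_eq_zero_of_natDegree_lt (by lia : y.natDegree < n + 1)]
  ring

lemma natDegree_eq_or_of_jacobiOperator_eq (hy : y ≠ 0)
    (h : jacobiOperator a b y = jacobiEigenvalue a b n • y) :
    y.natDegree = n ∨ (y.natDegree + n + a + b + 1 : ℝ) = 0 := by
  have top_coeff := coeff_jacobiOperator_of_natDegree_le (a := a) (b := b) le_rfl (y := y)
  rw [h, coeff_smul, smul_eq_mul] at top_coeff
  exact jacobiEigenvalue_eq_iff.mp
    (mul_right_cancel₀ (mt leadingCoeff_eq_zero.mp hy) top_coeff).symm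

/-- A combination of `y` and `z` killing the top coefficient is an eigenvector of smaller degree. -/
lemma eq_smul_of_jacobiOperator_eq (hz : z.natDegree = n) (hz0 : z ≠ 0)
    (hy_eigen : jacobiOperator a b y = jacobiEigenvalue a b n • y)
    (hz_eigen : jacobiOperator a b z = jacobiEigenvalue a b n • z) (hy : y.natDegree ≤ n)
    (hres : ∀ k < n, (k + n + a + b + 1 : ℝ) ≠ 0) : y = (y.coeff n / z.coeff n) • z := by
  have hzn : z.coeff n ≠ 0 := hz ▸ mt leadingCoeff_eq_zero.mp hz0
  by_contra hne
  set r := y - (y.coeff n / z.coeff n) • z with hr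
  have hr0 : r ≠ 0 := sub_ne_zero.mpr hne
  have hr_le : r.natDegree ≤ n :=
    (natDegree_sub_le _ _).trans (max_le hy ((natDegree_smul_le _ _).trans hz.le))
  have hr_coeff : r.coeff n = 0 := by
    rw [hr, coeff_sub, coeff_smul, smul_eq_mul, div_mul_cancel₀ _ hzn, sub_self]
  have hr_lt : r.natDegree < n :=
    hr_le.lt_of_ne fun hrn => hr0 (leadingCoeff_eq_zero.mp (by rwa [leadingCoeff, hrn]))
  have hr_eigen : jacobiOperator a b r = jacobiEigenvalue a b n • r := by
    rw [hr, map_sub, map_smul, hy_eigen, hz_eigen, smul_sub, smul_comm]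
  rcases natDegree_eq_or_of_jacobiOperator_eq hr0 hr_eigen with heq | heq
  · exact hr_lt.ne heq
  · exact hres _ hr_lt heq

lemma natDegree_eq_of_jacobiOperator_eq_add {c : ℝ} (hc : c ≠ 0) (hz : z ≠ 0)
    (hres : (z.natDegree + n + a + b + 1 : ℝ) = 0)
    (h : jacobiOperator a b y = jacobiEigenvalue a b n • y + c • z) : y.natDegree = n := by
  have hz_top : z.coeff z.natDegree ≠ 0 := mt leadingCoeff_eq_zero.mp hz
  rcases le_or_gt y.natDegree z.natDegree with hle | hgt
  · have hcoeff := coeff_jacobiOperator_of_natDegree_le (a := a) (b := b) hle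
    rw [h, coeff_add, coeff_smul, coeff_smul, smul_eq_mul, smul_eq_mul,
      jacobiEigenvalue_eq_iff.mpr (Or.inr hres), add_comm, add_eq_right] at hcoeff
    exact (mul_ne_zero hc hz_top hcoeff).elim
  · have hcoeff := coeff_jacobiOperator_of_natDegree_le (a := a) (b := b) le_rfl (y := y)
    rw [h, coeff_add, coeff_smul, coeff_smul, smul_eq_mul, smul_eq_mul,
      coeff_eq_zero_of_natDegree_lt hgt, mul_zero, add_zero] at hcoeff
    have hy : y ≠ 0 := fun hy => by simp [hy] at hgt
    rcases jacobiEigenvalue_eq_iff.mp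
      (mul_right_cancel₀ (mt leadingCoeff_eq_zero.mp hy) hcoeff) with heq | heq
    · exact heq.symm
    · have : (y.natDegree : ℝ) = z.natDegree := by linarith
      exact absurd (Nat.cast_injective this) hgt.ne'

end JacobiOperator

/-! ### Jacobi polynomials -/

section JacobiPolynomial

lemma genBinom_eq_ringChoose (z : ℝ) (k : ℕ) : genBinom z k = Ring.choose z k := by
  rw [genBinom, Ring.choose_eq_smul, ← aeval_eq_smeval, aeval_def, eval₂_eq_eval_map,
    descPochhammer_map, descPochhammer_eval_eq_prod_range, smul_eq_mul, inv_mul_eq_div]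

lemma genBinom_succ (z : ℝ) (k : ℕ) :
    (k + 1) * genBinom z (k + 1) = (z - k) * genBinom z k := by
  rw [genBinom, genBinom, prod_range_succ, Nat.factorial_succ]
  push_cast
  field_simp

lemma genBinom_ne_zero {z : ℝ} {k : ℕ} (hz : ∀ i < k, z ≠ i) : genBinom z k ≠ 0 :=
  div_ne_zero (prod_ne_zero_iff.mpr fun i hi => sub_ne_zero.mpr (hz i (mem_range.mp hi)))
    (by positivity)

/-- The Jacobi polynomial `jacobiP a b n` as an element of `ℝ[X]`. -/
def jacobiPolynomial (a b : ℝ) (n : ℕ) : ℝ[X] :=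
  C (2⁻¹ ^ n) * ∑ p ∈ antidiagonal n,
    C (genBinom (n + a) p.1 * genBinom (n + b) p.2) * ((X - 1) ^ p.2 * (X + 1) ^ p.1)

lemma eval_jacobiPolynomial (a b : ℝ) (n : ℕ) (x : ℝ) :
    eval x (jacobiPolynomial a b n) = jacobiP a b n x := by
  rw [jacobiPolynomial, jacobiP, Nat.sum_antidiagonal_eq_sum_range_succ_mk]
  simp [eval_finsetSum, mul_assoc]

lemma jacobiOperator_X_sub_one_pow_mul_X_add_one_pow (a b : ℝ) (i j : ℕ) :
    jacobiOperator a b ((X - 1) ^ i * (X + 1) ^ j) =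
      jacobiEigenvalue a b (i + j) • ((X - 1) ^ i * (X + 1) ^ j) +
        (i * (i + a)) • ((X - 1) ^ i * (X + 1) ^ j - (X - 1) ^ (i - 1) * (X + 1) ^ (j + 1)) +
        (j * (j + b)) • ((X - 1) ^ i * (X + 1) ^ j - (X - 1) ^ (i + 1) * (X + 1) ^ (j - 1)) := by
  simp only [jacobiOperator, sturmOperator_apply, jacobiEigenvalue, derivative_mul, derivative_add,
    derivative_pow, derivative_sub, derivative_X, derivative_one, derivative_C, smul_eq_C_mul]
  rcases i with _ | _ | i <;> rcases j with _ | _ | j <;>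
  · simp only [C_add, C_mul, C_sub, C_neg, map_natCast, map_ofNat, map_one, map_zero,
      Nat.add_sub_cancel, zero_add, Nat.cast_zero, Nat.cast_add, Nat.cast_one,
      Nat.zero_sub, Nat.sub_self]
    ring

lemma genBinom_mul_genBinom_recurrence {a b : ℝ} {i j n : ℕ} (h : i + j + 1 = n) :
    genBinom (n + a) i * genBinom (n + b) (j + 1) * ((j + 1) * (j + 1 + a)) =
      genBinom (n + a) (i + 1) * genBinom (n + b) j * ((i + 1) * (i + 1 + b)) := by
  have hn : (n : ℝ) = i + j + 1 := by exact_mod_cast h.symm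
  have succ_left := genBinom_succ (n + a) i
  have succ_right := genBinom_succ (n + b) j
  rw [show n + a - i = j + 1 + a by rw [hn]; ring] at succ_left
  rw [show n + b - j = i + 1 + b by rw [hn]; ring] at succ_right
  linear_combination genBinom (n + a) i * (j + 1 + a) * succ_right -
    genBinom (n + b) j * (i + 1 + b) * succ_left

lemma jacobiOperator_jacobiPolynomial (a b : ℝ) (n : ℕ) :
    jacobiOperator a b (jacobiPolynomial a b n) =
      jacobiEigenvalue a b n • jacobiPolynomial a b n := by
  simp only [jacobiPolynomial, ← smul_eq_C_mul, map_smul, map_sum,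
    jacobiOperator_X_sub_one_pow_mul_X_add_one_pow]
  rw [smul_comm]
  congr 1
  simp only [smul_add, sum_add_distrib, smul_sum, add_assoc]
  rw [sum_congr rfl fun p hp => by rw [add_comm p.2, mem_antidiagonal.mp hp, smul_comm],
    add_eq_left]
  obtain _ | n := n
  · simp
  · rw [Nat.sum_antidiagonal_succ', Nat.sum_antidiagonal_succ]
    simp only [Nat.cast_zero, zero_mul, zero_smul, smul_zero, zero_add, ← sum_add_distrib]
    refine sum_eq_zero fun p hp => ?_
    have hrec := genBinom_mul_genBinom_recurrence (a := a) (b := b)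
      (congrArg (· + 1) (mem_antidiagonal.mp hp))
    simp only [smul_smul, Nat.add_sub_cancel]
    push_cast at hrec ⊢
    rw [hrec]
    module

lemma natDegree_jacobiPolynomial_le (a b : ℝ) (n : ℕ) : (jacobiPolynomial a b n).natDegree ≤ n := by
  refine (natDegree_C_mul_le _ _).trans (natDegree_sum_le_of_forall_le _ _ fun p hp => ?_)
  refine (natDegree_C_mul_le _ _).trans ?_
  rw [← mem_antidiagonal.mp hp]
  compute_degree
  lia

lemma coeff_jacobiPolynomial (a b : ℝ) (n : ℕ) :
    (jacobiPolynomial a b n).coeff n = 2⁻¹ ^ n * genBinom (2 * n + a + b) n := by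
  have monic_term (p : ℕ × ℕ) (hp : p ∈ antidiagonal n) :
      ((X - 1 : ℝ[X]) ^ p.2 * (X + 1) ^ p.1).coeff n = 1 := by
    have hmonic : ((X - C 1 : ℝ[X]) ^ p.2 * (X + C 1) ^ p.1).Monic :=
      ((monic_X_sub_C 1).pow _).mul ((monic_X_add_C 1).pow _)
    have hdeg : ((X - C 1 : ℝ[X]) ^ p.2 * (X + C 1) ^ p.1).natDegree = n := by
      rw [((monic_X_sub_C 1).pow _).natDegree_mul ((monic_X_add_C 1).pow _), natDegree_pow,
        natDegree_pow, natDegree_X_sub_C, natDegree_X_add_C, ← mem_antidiagonal.mp hp]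
      lia
    rw [← hmonic.coeff_natDegree, hdeg, map_one]
  rw [jacobiPolynomial, coeff_C_mul, finsetSum_coeff, genBinom_eq_ringChoose,
    show 2 * n + a + b = (n + a) + (n + b) by ring, Ring.add_choose_eq _ (Commute.all _ _)]
  congr 1
  refine sum_congr rfl fun p hp => ?_
  rw [coeff_C_mul, monic_term p hp, mul_one, genBinom_eq_ringChoose, genBinom_eq_ringChoose]

lemma natDegree_jacobiPolynomial {a b : ℝ} {n : ℕ} (h : ∀ i < n, 2 * n + a + b ≠ i) :
    (jacobiPolynomial a b n).natDegree = n := by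
  refine natDegree_eq_of_le_of_coeff_ne_zero (natDegree_jacobiPolynomial_le a b n) ?_
  rw [coeff_jacobiPolynomial]
  exact mul_ne_zero (by positivity) (genBinom_ne_zero h)

lemma jacobiPolynomial_ne_zero {a b : ℝ} {n : ℕ} (h : ∀ i < n, 2 * n + a + b ≠ i) :
    jacobiPolynomial a b n ≠ 0 := by
  intro h0
  have hcoeff := coeff_jacobiPolynomial a b n
  rw [h0, coeff_zero] at hcoeff
  exact mul_ne_zero (by positivity) (genBinom_ne_zero h) hcoeff.symm

end JacobiPolynomial

/-! ### Expansions in powers of `(1 - X) / 2` -/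

section ExpansionAtOne

/-- The local variable `(1 - X) / 2` at the endpoint `1`, in which Jacobi polynomials are
hypergeometric. -/
def halfOneSub : ℝ[X] := C (-2⁻¹) * (X - 1)

lemma eval_halfOneSub (x : ℝ) : eval x halfOneSub = (1 - x) / 2 := by
  simp only [halfOneSub, eval_mul, eval_C, eval_sub, eval_X, eval_one]
  ring

lemma natDegree_halfOneSub : halfOneSub.natDegree = 1 := by
  rw [halfOneSub, natDegree_C_mul (by norm_num), ← C_1, natDegree_X_sub_C]

lemma halfOneSub_ne_zero : halfOneSub ≠ 0 :=
  ne_zero_of_natDegree_gt (n := 0) (by simp [natDegree_halfOneSub])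

lemma jacobiOperator_halfOneSub_pow (a b : ℝ) (j : ℕ) :
    jacobiOperator a b (halfOneSub ^ j) =
      (j * (j + a)) • halfOneSub ^ (j - 1) + jacobiEigenvalue a b j • halfOneSub ^ j := by
  have hX : (X + 1 : ℝ[X]) = (X - 1) + C 2 := by rw [map_ofNat]; ring
  have hmul := jacobiOperator_X_sub_one_pow_mul_X_add_one_pow a b j 0
  simp only [halfOneSub, ← smul_eq_C_mul, _root_.smul_pow, map_smul]
  rw [pow_zero, mul_one] at hmul
  rw [hmul, hX]
  rcases j with _ | j
  · simp
  · simp only [add_zero, zero_add, pow_one, mul_one, Nat.add_sub_cancel, Nat.cast_zero,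
      zero_mul, zero_smul, mul_add, ← pow_succ, mul_comm _ (C (2 : ℝ)), ← smul_eq_C_mul]
    module

lemma jacobiOperator_halfOneSub_pow_mul (a : ℕ) (b : ℝ) (y : ℝ[X]) :
    jacobiOperator (-a) b (halfOneSub ^ a * y) =
      halfOneSub ^ a * (jacobiOperator a b y - (a * (b + 1)) • y) := by
  have hpow : jacobiOperator (-a) b (halfOneSub ^ a) = -C (a * (b + 1)) * halfOneSub ^ a := by
    rw [jacobiOperator_halfOneSub_pow, add_neg_cancel, mul_zero, zero_smul, zero_add,
      jacobiEigenvalue, smul_eq_C_mul, ← C_neg]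
    ring_nf
  have hderiv : (1 - X ^ 2) * derivative (halfOneSub ^ a) =
      -C (a : ℝ) * (1 + X) * halfOneSub ^ a := by
    rcases a with _ | a
    · simp
    · have hz : derivative halfOneSub = C (-2⁻¹) := by simp [halfOneSub]
      rw [derivative_pow, hz, Nat.add_sub_cancel, pow_succ, halfOneSub]
      ring
  rw [jacobiOperator] at hpow ⊢
  rw [sturmOperator_mul, hpow]
  simp only [jacobiOperator, sturmOperator_apply, smul_eq_C_mul, C_add, C_sub, C_neg, map_ofNat]
  linear_combination 2 * derivative y * hderiv

/-- The polynomial `∑ j < N, c j * ((1 - X) / 2) ^ j`. -/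
def expansionAtOne (N : ℕ) (c : ℕ → ℝ) : ℝ[X] := ∑ j ∈ range N, c j • halfOneSub ^ j

lemma eval_expansionAtOne (N : ℕ) (c : ℕ → ℝ) (x : ℝ) :
    eval x (expansionAtOne N c) = ∑ j ∈ range N, c j * ((1 - x) / 2) ^ j := by
  simp [expansionAtOne, eval_finsetSum, eval_halfOneSub]

lemma natDegree_expansionAtOne_le (n : ℕ) (c : ℕ → ℝ) :
    (expansionAtOne (n + 1) c).natDegree ≤ n :=
  natDegree_sum_le_of_forall_le _ _ fun j hj => (natDegree_smul_le _ _).trans <| by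
    simpa [natDegree_halfOneSub] using mem_range_succ_iff.mp hj

lemma expansionAtOne_eq_of_le {n N : ℕ} {c : ℕ → ℝ} (hn : n ≤ N) (hc : ∀ j, n ≤ j → c j = 0) :
    expansionAtOne n c = expansionAtOne N c :=
  sum_subset (range_mono hn) fun j _ hj => by rw [hc j (by simpa using hj), zero_smul]

lemma jacobiOperator_expansionAtOne {a b : ℝ} {N u : ℕ} {c r : ℕ → ℝ} (hN : c N = 0)
    (hc : ∀ j : ℕ, (j + 1) * (j + 1 + a) * c (j + 1) = (j - u) * (j + u + a + b + 1) * c j + r j) :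
    jacobiOperator a b (expansionAtOne N c) =
      jacobiEigenvalue a b u • expansionAtOne N c + expansionAtOne N r := by
  set f : ℕ → ℝ[X] := fun j => (c j * (j * (j + a))) • halfOneSub ^ (j - 1) with hf
  have hshift : ∑ j ∈ range N, f j = ∑ j ∈ range N, f (j + 1) := by
    have h := (sum_range_succ f N).symm.trans (sum_range_succ' f N)
    simpa [hf, hN] using h
  simp only [expansionAtOne, map_sum, map_smul, jacobiOperator_halfOneSub_pow, smul_add, smul_smul,
    sum_add_distrib, smul_sum]
  rw [hshift, ← sum_add_distrib, ← sum_add_distrib]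
  refine sum_congr rfl fun j _ => ?_
  simp only [hf, Nat.add_sub_cancel, ← add_smul, jacobiEigenvalue]
  congr 1
  push_cast
  linear_combination hc j

end ExpansionAtOne

/-! ### Hypergeometric coefficients and their parameter derivative -/

section Hypergeometric

/-- The coefficient of `z ^ j` in `₂F₁(-u, u - s + a + b + 1; a - s + 1; z)`. -/
def hypergeometricCoeff (a b : ℝ) (u j : ℕ) (s : ℝ) : ℝ :=
  poch (-u) j * poch (u - s + a + b + 1) j / (poch (a - s + 1) j * j.factorial)

variable {a b : ℝ} {u j : ℕ}

lemma poch_succ (z : ℝ) (j : ℕ) : poch z (j + 1) = poch z j * (z + j) :=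
  prod_range_succ _ _

lemma poch_ne_zero {z : ℝ} (hz : ∀ i < j, z + i ≠ 0) : poch z j ≠ 0 :=
  prod_ne_zero_iff.mpr fun i hi => hz i (mem_range.mp hi)

lemma hypergeometricCoeff_zero (a b : ℝ) (u : ℕ) (s : ℝ) : hypergeometricCoeff a b u 0 s = 1 := by
  simp [hypergeometricCoeff, poch]

lemma hypergeometricCoeff_eq_zero (a b s : ℝ) (h : u < j) : hypergeometricCoeff a b u j s = 0 := by
  have : poch (-u) j = 0 := prod_eq_zero (mem_range.mpr h) (by simp)
  rw [hypergeometricCoeff, this, zero_mul, zero_div]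

lemma deriv_hypergeometricCoeff_eq_zero (a b s : ℝ) (h : u < j) :
    deriv (hypergeometricCoeff a b u j) s = 0 := by
  rw [show hypergeometricCoeff a b u j = fun _ => 0 from
    funext fun t => hypergeometricCoeff_eq_zero a b t h, deriv_const]

lemma hypergeometricCoeff_symm {m n : ℕ} (h : (n + m + a + b + 1 : ℝ) = 0) (j : ℕ) :
    hypergeometricCoeff a b n j 0 = hypergeometricCoeff a b m j 0 := by
  simp only [hypergeometricCoeff, sub_zero]
  rw [show n + a + b + 1 = -(m : ℝ) by linarith, show m + a + b + 1 = -(n : ℝ) by linarith,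
    mul_comm (poch (-(n : ℝ)) j)]

lemma hypergeometricCoeff_succ {s : ℝ} (h : ∀ i < u, a - s + 1 + i ≠ 0) (j : ℕ) :
    (j + 1) * (j + 1 + a - s) * hypergeometricCoeff a b u (j + 1) s =
      (j - u) * (j + u + a + b + 1 - s) * hypergeometricCoeff a b u j s := by
  rcases lt_trichotomy j u with hj | rfl | hj
  · have hne : poch (a - s + 1) j ≠ 0 := poch_ne_zero fun i hi => h i (hi.trans hj)
    have hj' := h j hj
    simp only [hypergeometricCoeff, poch_succ, Nat.factorial_succ]
    push_cast
    field_simp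
    ring
  · simp [hypergeometricCoeff_eq_zero a b s (Nat.lt_succ_self j)]
  · simp [hypergeometricCoeff_eq_zero a b s hj,
      hypergeometricCoeff_eq_zero a b s (hj.trans (Nat.lt_succ_self j))]

lemma differentiableAt_hypergeometricCoeff (h : ∀ i < u, a + 1 + i ≠ 0) (b : ℝ) (j : ℕ) :
    DifferentiableAt ℝ (hypergeometricCoeff a b u j) 0 := by
  rcases lt_or_ge u j with hj | hj
  · have hzero : hypergeometricCoeff a b u j = fun _ => 0 :=
      funext fun s => hypergeometricCoeff_eq_zero a b s hj
    exact hzero ▸ differentiableAt_const 0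
  · have hne : poch (a - 0 + 1) j * j.factorial ≠ 0 :=
      mul_ne_zero (poch_ne_zero fun i hi => by simpa using h i (hi.trans_le hj)) (by positivity)
    exact DifferentiableAt.div (by unfold poch; fun_prop) (by unfold poch; fun_prop) hne

lemma deriv_hypergeometricCoeff_succ (h : ∀ i < u, a + 1 + i ≠ 0) (b : ℝ) (j : ℕ) :
    (j + 1) * (j + 1 + a) * deriv (hypergeometricCoeff a b u (j + 1)) 0 -
        (j + 1) * hypergeometricCoeff a b u (j + 1) 0 =
      (j - u) * (j + u + a + b + 1) * deriv (hypergeometricCoeff a b u j) 0 -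
        (j - u) * hypergeometricCoeff a b u j 0 := by
  have hderiv (k : ℕ) (p q : ℝ) : HasDerivAt
      (fun s => p * (q - s) * hypergeometricCoeff a b u k s)
      (p * q * deriv (hypergeometricCoeff a b u k) 0 - p * hypergeometricCoeff a b u k 0) 0 := by
    have := (((hasDerivAt_id (0 : ℝ)).const_sub q).const_mul p).mul
      (differentiableAt_hypergeometricCoeff h b k).hasDerivAt
    refine this.congr_deriv ?_
    simp only [id_eq, sub_zero]
    ring
  have hne : ∀ᶠ s : ℝ in nhds 0, ∀ i ∈ range u, a - s + 1 + i ≠ 0 := by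
    refine (Filter.eventually_all_finset _).mpr fun i hi => ?_
    have hcont : ContinuousAt (fun s : ℝ => a - s + 1 + i) 0 := by fun_prop
    exact hcont.eventually_ne (by simpa using h i (mem_range.mp hi))
  refine (hderiv (j + 1) (j + 1) (j + 1 + a)).unique
    ((hderiv j (j - u) (j + u + a + b + 1)).congr_of_eventuallyEq ?_)
  filter_upwards [hne] with s hs
  exact hypergeometricCoeff_succ (fun i hi => hs i (mem_range.mpr hi)) j

end Hypergeometric

/-! ### Resonant pairs of degrees -/

section Resonance

/-- The terminating series `₂F₁(-n, n + a + b + 1; a + 1; (1 - X) / 2)`, a multiple of the Jacobi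
polynomial of degree `n` normalized to be `1` at `1`. -/
def hypergeometricPolynomial (a b : ℝ) (n : ℕ) : ℝ[X] :=
  expansionAtOne (n + 1) fun j => hypergeometricCoeff a b n j 0

/-- For degrees `n`, `m` with `n + m + a + b + 1 = 0` the two series `₂F₁` agree at `s = 0`; the
difference of their `s`-derivatives is a generalized eigenvector of the Jacobi operator. -/
def resonantPolynomial (a b : ℝ) (n m : ℕ) : ℝ[X] :=
  expansionAtOne (n + 1) fun j =>
    deriv (hypergeometricCoeff a b n j) 0 - deriv (hypergeometricCoeff a b m j) 0

variable {a b : ℝ} {n m : ℕ}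

lemma hypergeometricPolynomial_ne_zero (a b : ℝ) (n : ℕ) : hypergeometricPolynomial a b n ≠ 0 := by
  intro h
  have heval : eval 1 (hypergeometricPolynomial a b n) = 1 := by
    rw [hypergeometricPolynomial, eval_expansionAtOne, sum_range_succ']
    simp [hypergeometricCoeff_zero]
  simp [h] at heval

lemma jacobiOperator_hypergeometricPolynomial (h : ∀ i < n, a + 1 + i ≠ 0) (b : ℝ) :
    jacobiOperator a b (hypergeometricPolynomial a b n) =
      jacobiEigenvalue a b n • hypergeometricPolynomial a b n := by
  have hrec := jacobiOperator_expansionAtOne (a := a) (b := b) (N := n + 1) (u := n)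
    (c := fun j => hypergeometricCoeff a b n j 0) (r := 0)
    (hypergeometricCoeff_eq_zero a b 0 (Nat.lt_succ_self n)) fun j => by
      simpa using hypergeometricCoeff_succ (b := b) (s := 0) (by simpa using h) j
  simpa [expansionAtOne, hypergeometricPolynomial] using hrec

lemma exists_hypergeometricPolynomial_eq_smul (h : ∀ i < m, a + 1 + i ≠ 0)
    (hres : (n + m + a + b + 1 : ℝ) = 0) (hmn : m ≤ n) :
    ∃ t : ℝ, t ≠ 0 ∧ hypergeometricPolynomial a b m = t • jacobiPolynomial a b m := by
  have hmn' : (m : ℝ) ≤ n := by exact_mod_cast hmn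
  have hdeg (i : ℕ) (_ : i < m) : 2 * m + a + b ≠ i := by
    have : (0 : ℝ) ≤ i := by positivity
    intro; linarith
  have hlt (k : ℕ) (hk : k < m) : (k + m + a + b + 1 : ℝ) ≠ 0 := by
    have : (k : ℝ) < m := by exact_mod_cast hk
    intro; linarith
  have heq := eq_smul_of_jacobiOperator_eq (natDegree_jacobiPolynomial hdeg)
    (jacobiPolynomial_ne_zero hdeg) (jacobiOperator_hypergeometricPolynomial h b)
    (jacobiOperator_jacobiPolynomial a b m) (natDegree_expansionAtOne_le m _) hlt
  refine ⟨_, fun ht => ?_, heq⟩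
  rw [ht, zero_smul] at heq
  exact hypergeometricPolynomial_ne_zero a b m heq

lemma jacobiOperator_resonantPolynomial (h : ∀ i < n, a + 1 + i ≠ 0)
    (hres : (n + m + a + b + 1 : ℝ) = 0) (hmn : m ≤ n) :
    jacobiOperator a b (resonantPolynomial a b n m) =
      jacobiEigenvalue a b n • resonantPolynomial a b n m +
        (n - m : ℝ) • hypergeometricPolynomial a b m := by
  have hrec := jacobiOperator_expansionAtOne (a := a) (b := b) (N := n + 1) (u := n)
    (c := fun j => deriv (hypergeometricCoeff a b n j) 0 - deriv (hypergeometricCoeff a b m j) 0)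
    (r := fun j => (n - m) * hypergeometricCoeff a b m j 0)
    (by simp only [deriv_hypergeometricCoeff_eq_zero a b 0 (Nat.lt_succ_self n),
      deriv_hypergeometricCoeff_eq_zero a b 0 (Nat.lt_succ_of_le hmn), sub_zero])
    fun j => by
      have hn := deriv_hypergeometricCoeff_succ h b j
      have hm := deriv_hypergeometricCoeff_succ (fun i hi => h i (hi.trans_le hmn)) b j
      rw [hypergeometricCoeff_symm hres, hypergeometricCoeff_symm hres] at hn
      linear_combination hn - hm - (n - m) * deriv (hypergeometricCoeff a b m j) 0 * hres
  rw [resonantPolynomial, hrec, hypergeometricPolynomial,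
    expansionAtOne_eq_of_le (Nat.succ_le_succ hmn)
      fun j hj => hypergeometricCoeff_eq_zero a b 0 (Nat.lt_of_succ_le hj)]
  simp only [expansionAtOne, smul_sum, smul_smul]

lemma exists_jacobiOperator_resonantPolynomial (h : ∀ i < n, a + 1 + i ≠ 0)
    (hres : (n + m + a + b + 1 : ℝ) = 0) (hmn : m < n) :
    ∃ t : ℝ, t ≠ 0 ∧ jacobiOperator a b (resonantPolynomial a b n m) =
      jacobiEigenvalue a b n • resonantPolynomial a b n m + t • jacobiPolynomial a b m := by
  obtain ⟨t, ht, heq⟩ := exists_hypergeometricPolynomial_eq_smul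
    (fun i hi => h i (hi.trans hmn)) hres hmn.le
  have hne : (n - m : ℝ) ≠ 0 := sub_ne_zero.mpr (by exact_mod_cast hmn.ne')
  exact ⟨_, mul_ne_zero hne ht, by
    rw [jacobiOperator_resonantPolynomial h hres hmn.le, heq, smul_smul]⟩

end Resonance

/-! ### The modified Jacobi polynomials -/

section JacobiHat

/-- The prefactor of `phiJ (-a) (-b) u`. -/
def phiNormalization (a b u : ℕ) : ℝ :=
  poch (-a + 1) (max u (a + b - 1 - u)) /
    (max u.factorial (a + b - 1 - u).factorial : ℕ)

/-- The prefactor of `Phat (-a) (-b) M n` in the range `a ≤ n < a + b`. -/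
def middleNormalization (a b n : ℕ) : ℝ :=
  (-1) ^ (-(b : ℤ) + n) *
    ((n - a).factorial * (n - b).factorial * (a + b - 1 - n).factorial) / n.factorial

/-- The polynomial `Phat (-a) (-b) M n`. The degree `a + b - 1 - n` is the other degree with the
same Jacobi eigenvalue as `n`. -/
def jacobiHat (a b : ℕ) (M : ℕ → ℝ) (n : ℕ) : ℝ[X] :=
  if a + b ≤ 2 * n ∧ n < a then
    phiNormalization a b n • resonantPolynomial (-a) (-b) n (a + b - 1 - n)
  else if a ≤ n ∧ n < a + b then
    middleNormalization a b n • ((M (n - a) - 1)⁻¹ • jacobiPolynomial (-a) (-b) (a + b - 1 - n) +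
      halfOneSub ^ a * jacobiPolynomial a (-b) (n - a))
  else jacobiPolynomial (-a) (-b) n

variable {a b n : ℕ}

lemma neg_add_one_add_ne_zero (hn : n < a) : ∀ i < n, -(a : ℝ) + 1 + i ≠ 0 := by
  intro i hi h
  have : (i + 1 : ℝ) < a := by exact_mod_cast (Nat.succ_le_of_lt hi).trans_lt hn
  linarith

lemma add_reflect_add_eq_zero (hn : n < a + b) :
    (n + (a + b - 1 - n : ℕ) + -(a : ℝ) + -(b : ℝ) + 1 : ℝ) = 0 := by
  have h : n + (a + b - 1 - n) + 1 = a + b := by omega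
  have h' : (n + (a + b - 1 - n : ℕ) + 1 : ℝ) = a + b := by exact_mod_cast h
  linarith

lemma phiNormalization_symm (hn : n < a + b) :
    phiNormalization a b (a + b - 1 - n) = phiNormalization a b n := by
  rw [phiNormalization, phiNormalization, show a + b - 1 - (a + b - 1 - n) = n by omega, max_comm,
    max_comm (Nat.factorial _)]

lemma phiNormalization_ne_zero (hn : n < a) (hn' : a + b - 1 - n < a) :
    phiNormalization a b n ≠ 0 := by
  refine div_ne_zero (poch_ne_zero (neg_add_one_add_ne_zero (max_lt hn hn'))) ?_
  exact_mod_cast (lt_max_of_lt_left n.factorial_pos).ne'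

lemma middleNormalization_ne_zero (a b n : ℕ) : middleNormalization a b n ≠ 0 := by
  unfold middleNormalization
  positivity

lemma deriv_phiJ {u : ℕ} (hu : u < a) (b : ℕ) (x : ℝ) :
    deriv (fun s => phiJ (-a) (-b) u s x) 0 = phiNormalization a b u *
      eval x (expansionAtOne (u + 1) fun j => deriv (hypergeometricCoeff (-a) (-b) u j) 0) := by
  have hphi (s : ℝ) : phiJ (-a) (-b) u s x = phiNormalization a b u *
      ∑ j ∈ range (u + 1), hypergeometricCoeff (-a) (-b) u j s * ((1 - x) / 2) ^ j := by
    have hdegree : (-(-(a : ℤ)) - -(b : ℤ) - (u : ℤ) - 1).toNat = a + b - 1 - u := by omega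
    rw [phiJ, hdegree, phiNormalization]
    push_cast
    rfl
  simp only [hphi, eval_expansionAtOne]
  exact ((HasDerivAt.fun_sum fun j _ => (differentiableAt_hypergeometricCoeff
    (neg_add_one_add_ne_zero hu) _ j).hasDerivAt.mul_const _).const_mul _).deriv

lemma deriv_phiJ_sub_deriv_phiJ (hn : a + b ≤ 2 * n) (hna : n < a) (x : ℝ) :
    deriv (fun s => phiJ (-a) (-b) n s x) 0 -
        deriv (fun s => phiJ (-a) (-b) (a + b - 1 - n) s x) 0 =
      phiNormalization a b n * eval x (resonantPolynomial (-a) (-b) n (a + b - 1 - n)) := by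
  have hm : a + b - 1 - n + 1 ≤ n + 1 := by omega
  rw [deriv_phiJ hna, deriv_phiJ (by omega), phiNormalization_symm (by omega), ← mul_sub,
    expansionAtOne_eq_of_le hm fun j hj => deriv_hypergeometricCoeff_eq_zero _ _ _ hj]
  simp only [resonantPolynomial, eval_expansionAtOne, sub_mul, sum_sub_distrib]

lemma ceil_div_two_le_iff (m n : ℤ) : ⌈(m : ℚ) / 2⌉ ≤ n ↔ m ≤ 2 * n := by
  rw [Int.ceil_le, div_le_iff₀' two_pos]
  exact_mod_cast Iff.rfl

lemma Phat_eq_eval_jacobiHat (a b : ℕ) (M : ℕ → ℝ) (n : ℕ) :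
    Phat (-a) (-b) M n = fun x => eval x (jacobiHat a b M n) := by
  ext x
  have hreflect : (-(-(a : ℤ)) - -(b : ℤ) - (n : ℤ) - 1).toNat = a + b - 1 - n := by omega
  have ha : (-(-(a : ℤ))).toNat = a := by omega
  have hsub_a : (-(a : ℤ) + (n : ℤ)).toNat = n - a := by omega
  have hsub_a' : ((n : ℤ) + -(a : ℤ)).toNat = n - a := by omega
  have hsub_b : ((n : ℤ) + -(b : ℤ)).toNat = n - b := by omega
  have hresonant : (-(-(a : ℤ)) - -(b : ℤ) ≤ 2 * (n : ℤ) ∧ (n : ℤ) ≤ -(-(a : ℤ)) - 1) ↔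
      (a + b ≤ 2 * n ∧ n < a) := by omega
  have hmiddle : (-(-(a : ℤ)) ≤ (n : ℤ) ∧ (n : ℤ) ≤ -(-(a : ℤ)) - -(b : ℤ) - 1) ↔
      (a ≤ n ∧ n < a + b) := by omega
  simp only [Phat, jacobiHat, hreflect, ha, hsub_a, hsub_a', hsub_b, ceil_div_two_le_iff, hresonant,
    hmiddle]
  split_ifs with h₁ h₂
  · rw [deriv_phiJ_sub_deriv_phiJ h₁.1 h₁.2, eval_smul, smul_eq_mul]
  · simp only [eval_smul, eval_mul, eval_add, eval_pow, smul_eq_mul, eval_halfOneSub,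
      eval_jacobiPolynomial, middleNormalization]
    push_cast
    rw [neg_neg]
  · rw [eval_jacobiPolynomial]
    push_cast
    rfl

lemma jacobiHat_of_resonant (M : ℕ → ℝ) (hn : a + b ≤ 2 * n) (hna : n < a) :
    jacobiHat a b M n = phiNormalization a b n •
      resonantPolynomial (-a) (-b) n (a + b - 1 - n) :=
  if_pos ⟨hn, hna⟩

lemma jacobiHat_of_middle (M : ℕ → ℝ) (hn : a ≤ n) (hn' : n < a + b) :
    jacobiHat a b M n = middleNormalization a b n •
      ((M (n - a) - 1)⁻¹ • jacobiPolynomial (-a) (-b) (a + b - 1 - n) +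
        halfOneSub ^ a * jacobiPolynomial a (-b) (n - a)) := by
  rw [jacobiHat, if_neg (by omega), if_pos ⟨hn, hn'⟩]

lemma jacobiHat_of_regular (M : ℕ → ℝ) (hn : 2 * n < a + b ∧ n < a ∨ a + b ≤ n) :
    jacobiHat a b M n = jacobiPolynomial (-a) (-b) n := by
  rw [jacobiHat, if_neg (by omega), if_neg (by omega)]

lemma exists_jacobiOperator_jacobiHat_of_resonant (M : ℕ → ℝ) (hn : a + b ≤ 2 * n) (hna : n < a) :
    ∃ t : ℝ, t ≠ 0 ∧ jacobiOperator (-a) (-b) (jacobiHat a b M n) =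
      jacobiEigenvalue (-a) (-b) n • jacobiHat a b M n +
        t • jacobiPolynomial (-a) (-b) (a + b - 1 - n) := by
  obtain ⟨t, ht, heq⟩ := exists_jacobiOperator_resonantPolynomial (neg_add_one_add_ne_zero hna)
    (add_reflect_add_eq_zero (by omega : n < a + b)) (by omega)
  refine ⟨_, mul_ne_zero (phiNormalization_ne_zero hna (by omega : a + b - 1 - n < a)) ht, ?_⟩
  rw [jacobiHat_of_resonant M hn hna, map_smul, heq]
  module

lemma jacobiOperator_jacobiHat (M : ℕ → ℝ) (hn : a + b ≤ 2 * n → a ≤ n) :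
    jacobiOperator (-a) (-b) (jacobiHat a b M n) =
      jacobiEigenvalue (-a) (-b) n • jacobiHat a b M n := by
  by_cases h : a ≤ n ∧ n < a + b
  · have hreflect : jacobiEigenvalue (-a) (-b) (a + b - 1 - n) = jacobiEigenvalue (-a) (-b) n :=
      jacobiEigenvalue_eq_iff.mpr (Or.inr (by linarith [add_reflect_add_eq_zero h.2]))
    have hfactor : jacobiOperator (-a) (-b) (halfOneSub ^ a * jacobiPolynomial a (-b) (n - a)) =
        jacobiEigenvalue (-a) (-b) n • (halfOneSub ^ a * jacobiPolynomial a (-b) (n - a)) := by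
      rw [jacobiOperator_halfOneSub_pow_mul, jacobiOperator_jacobiPolynomial, ← sub_smul,
        mul_smul_comm, jacobiEigenvalue, jacobiEigenvalue, Nat.cast_sub h.1]
      ring_nf
    rw [jacobiHat_of_middle M h.1 h.2, map_smul, map_add, map_smul, hfactor,
      jacobiOperator_jacobiPolynomial, hreflect]
    module
  · rw [jacobiHat_of_regular M (by omega), jacobiOperator_jacobiPolynomial]

lemma two_mul_sub_ne_of_regular (hn : 2 * n < a + b ∨ a + b ≤ n) :
    ∀ i < n, 2 * n + -(a : ℝ) + -(b : ℝ) ≠ i := by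
  intro i hi h
  have : 2 * n = i + a + b := by
    have : (2 * n : ℝ) = i + a + b := by linarith
    exact_mod_cast this
  omega

lemma natDegree_jacobiHat_of_middle (hab : b ≤ a) (M : ℕ → ℝ) (hn : a ≤ n) (hn' : n < a + b) :
    (jacobiHat a b M n).natDegree = n := by
  have hdeg : ∀ i < n - a, 2 * (n - a : ℕ) + (a : ℝ) + -(b : ℝ) ≠ i := by
    intro i hi h
    have : 2 * (n - a) + a = i + b := by
      have : (2 * (n - a : ℕ) + a : ℝ) = i + b := by linarith
      exact_mod_cast this
    omega
  have hfactor : (halfOneSub ^ a * jacobiPolynomial a (-b) (n - a)).natDegree = n := by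
    rw [natDegree_mul (pow_ne_zero a halfOneSub_ne_zero) (jacobiPolynomial_ne_zero hdeg),
      natDegree_pow, natDegree_halfOneSub, natDegree_jacobiPolynomial hdeg]
    omega
  rw [jacobiHat_of_middle M hn hn', natDegree_smul _ (middleNormalization_ne_zero a b n),
    natDegree_add_eq_right_of_natDegree_lt, hfactor]
  calc _ ≤ a + b - 1 - n := (natDegree_smul_le _ _).trans (natDegree_jacobiPolynomial_le _ _ _)
    _ < _ := by omega

lemma natDegree_jacobiHat (hab : b ≤ a) (M : ℕ → ℝ) (n : ℕ) :
    (jacobiHat a b M n).natDegree = n := by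
  by_cases hres : a + b ≤ 2 * n ∧ n < a
  · have hdeg := two_mul_sub_ne_of_regular (by omega : 2 * (a + b - 1 - n) < a + b ∨ _)
    obtain ⟨t, ht, heq⟩ := exists_jacobiOperator_jacobiHat_of_resonant M hres.1 hres.2
    refine natDegree_eq_of_jacobiOperator_eq_add ht (jacobiPolynomial_ne_zero hdeg) ?_ heq
    rw [natDegree_jacobiPolynomial hdeg]
    linarith [add_reflect_add_eq_zero (by omega : n < a + b)]
  by_cases hmid : a ≤ n ∧ n < a + b
  · exact natDegree_jacobiHat_of_middle hab M hmid.1 hmid.2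
  · rw [jacobiHat_of_regular M (by omega)]
    exact natDegree_jacobiPolynomial (two_mul_sub_ne_of_regular (by omega))

lemma jacobiHat_ne_zero (hab : b ≤ a) (M : ℕ → ℝ) (n : ℕ) : jacobiHat a b M n ≠ 0 := by
  rcases n.eq_zero_or_pos with rfl | hn
  · rw [jacobiHat_of_regular M (by omega)]
    exact jacobiPolynomial_ne_zero (by simp)
  · exact ne_zero_of_natDegree_gt (hn.trans_eq (natDegree_jacobiHat hab M n).symm)

lemma span_range_jacobiHat (hab : b ≤ a) (M : ℕ → ℝ) :
    Submodule.span ℝ (Set.range (jacobiHat a b M)) = ⊤ :=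
  Sequence.span ⟨jacobiHat a b M, fun n => by
    rw [degree_eq_natDegree (jacobiHat_ne_zero hab M n), natDegree_jacobiHat hab M]⟩
    fun n => (leadingCoeff_ne_zero.mpr (jacobiHat_ne_zero hab M n)).isUnit

end JacobiHat

/-! ### Wronskians orthogonal with respect to a Jacobi-type weight -/

section JacobiWeight

lemma hasDerivAt_one_sub_sq_mul_jacobiWeight {a b x : ℝ} {k A B : ℕ} (hA : (A : ℝ) = a + k)
    (hB : (B : ℝ) = b + k) {Ω : ℝ[X]} (hΩ : eval x Ω ≠ 0) :
    HasDerivAt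
      (fun x => eval x (1 - X ^ 2 : ℝ[X]) * ((1 - x) ^ A * (1 + x) ^ B / eval x Ω ^ 2))
      ((eval x (C (b - a) - C (a + b + 2) * X + (k : ℝ[X]) * derivative (1 - X ^ 2)) -
          2 * eval x (1 - X ^ 2) * eval x (derivative Ω) / eval x Ω) *
        ((1 - x) ^ A * (1 + x) ^ B / eval x Ω ^ 2)) x := by
  have hleft : HasDerivAt (fun x : ℝ => (1 - x) ^ (A + 1)) (-((A + 1) * (1 - x) ^ A)) x := by
    simpa using ((hasDerivAt_id x).const_sub (1 : ℝ)).fun_pow (A + 1)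
  have hright : HasDerivAt (fun x : ℝ => (1 + x) ^ (B + 1)) ((B + 1) * (1 + x) ^ B) x := by
    simpa using ((hasDerivAt_id x).const_add (1 : ℝ)).fun_pow (B + 1)
  have hquot := (hleft.fun_mul hright).fun_div ((Ω.hasDerivAt x).fun_pow 2) (pow_ne_zero 2 hΩ)
  refine (hquot.congr_of_eventuallyEq (.of_forall fun t => ?_)).congr_deriv ?_
  · simp only [eval_sub, eval_one, eval_pow, eval_X]
    ring
  · rw [hA, hB]
    simp only [derivative_sub, derivative_one, derivative_X_pow_succ, eval_add, eval_sub, eval_mul,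
      eval_neg, eval_pow, eval_C, eval_X, eval_one, eval_natCast, zero_sub, Nat.cast_one,
      Nat.cast_ofNat, Nat.add_one_sub_one, pow_one]
    field_simp
    ring

lemma integral_wronskianMap_mul_jacobiWeight_eq_zero {a b l₁ l₂ : ℝ} {k A B : ℕ}
    (hA : (A : ℝ) = a + k) (hB : (B : ℝ) = b + k) (hl : l₁ ≠ l₂) {f : Fin k → ℝ[X]} {y z : ℝ[X]}
    (hf : ∀ i, jacobiOperator a b (f i) ∈ Submodule.span ℝ (Set.range f))
    (hΩ : ∀ x ∈ Set.Icc (-1) 1, eval x (wronskianDet f) ≠ 0)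
    (hy : jacobiOperator a b y = l₁ • y) (hz : jacobiOperator a b z = l₂ • z) :
    ∫ x in (-1)..1, eval x (wronskianMap f y) * eval x (wronskianMap f z) *
      ((1 - x) ^ A * (1 + x) ^ B / eval x (wronskianDet f) ^ 2) = 0 := by
  rw [← Set.uIcc_of_le (by norm_num)] at hΩ
  refine integral_wronskianMap_mul_eq_zero hl hf hΩ ?_
    (fun x hx => hasDerivAt_one_sub_sq_mul_jacobiWeight hA hB (hΩ x hx)) (by simp) (by simp) hy hz
  exact ContinuousOn.div (by fun_prop) (by fun_prop) fun x hx => pow_ne_zero 2 (hΩ x hx)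

end JacobiWeight

/-! ### The exceptional Jacobi polynomials -/

section Exceptional

variable {a b : ℕ} {M : ℕ → ℝ} {F : Finset ℕ}

/-- The polynomials `Phat (-a) (-b) M f`, `f ∈ F`, in increasing order of `f`. -/
def jacobiHatFamily (a b : ℕ) (M : ℕ → ℝ) (F : Finset ℕ) (i : Fin F.card) : ℝ[X] :=
  jacobiHat a b M (elemOf F i)

lemma iteratedDeriv_eval (p : ℝ[X]) (j : ℕ) :
    iteratedDeriv j (fun x => eval x p) = fun x => eval x (derivative^[j] p) := by
  induction j with
  | zero => simp
  | succ j ih =>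
    ext x
    rw [iteratedDeriv_succ, ih, Polynomial.deriv, Function.iterate_succ_apply']

lemma OmegaJ_eq_eval_wronskianDet (a b : ℕ) (M : ℕ → ℝ) (F : Finset ℕ) (x : ℝ) :
    OmegaJ (-a) (-b) M F x = eval x (wronskianDet (jacobiHatFamily a b M F)) := by
  rw [OmegaJ, wronskianDet, ← coe_evalRingHom, RingHom.map_det]
  simp only [Phat_eq_eval_jacobiHat, iteratedDeriv_eval]
  rfl

lemma exJacobi_eq_eval_wronskianMap (a b : ℕ) (M : ℕ → ℝ) (F : Finset ℕ) (n : ℕ) (x : ℝ) :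
    exJacobi (-a) (-b) M F n x =
      eval x (wronskianMap (jacobiHatFamily a b M F) (jacobiHat a b M (n - uF F))) := by
  rw [exJacobi, wronskianMap_eq_det, ← coe_evalRingHom, RingHom.map_det]
  simp only [Phat_eq_eval_jacobiHat, iteratedDeriv_eval]
  congr 1
  ext i j
  refine Fin.cases ?_ (fun l => ?_) i <;> rfl

lemma exists_jacobiHatFamily_eq {m : ℕ} (hm : m ∈ F) :
    ∃ i, jacobiHatFamily a b M F i = jacobiHat a b M m :=
  ⟨(F.orderIsoOfFin rfl).symm ⟨m, hm⟩, by simp [jacobiHatFamily, elemOf]⟩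

lemma jacobiHat_mem_span {m : ℕ} (hm : m ∈ F) :
    jacobiHat a b M m ∈ Submodule.span ℝ (Set.range (jacobiHatFamily a b M F)) :=
  Submodule.subset_span (exists_jacobiHatFamily_eq hm)

lemma le_card_of_Ico_subset (hF : Ico b (a + b) ⊆ F) : a ≤ F.card := by
  simpa using card_le_card hF

lemma jacobiOperator_jacobiHatFamily_mem_span (hF : Ico b (a + b) ⊆ F) (i : Fin F.card) :
    jacobiOperator (-a) (-b) (jacobiHatFamily a b M F i) ∈
      Submodule.span ℝ (Set.range (jacobiHatFamily a b M F)) := by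
  have hmem : elemOf F i ∈ F := (F.orderIsoOfFin rfl i).2
  rw [jacobiHatFamily]
  by_cases hres : a + b ≤ 2 * elemOf F i ∧ elemOf F i < a
  · obtain ⟨t, -, heq⟩ := exists_jacobiOperator_jacobiHat_of_resonant M hres.1 hres.2
    rw [heq, ← jacobiHat_of_regular M (by omega)]
    exact add_mem (Submodule.smul_mem _ _ (jacobiHat_mem_span hmem))
      (Submodule.smul_mem _ _ (jacobiHat_mem_span (hF (mem_Ico.mpr (by omega)))))
  · rw [jacobiOperator_jacobiHat M (by omega)]
    exact Submodule.smul_mem _ _ (jacobiHat_mem_span hmem)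

lemma wJ_eq (ha : a ≤ F.card) (hb : b ≤ F.card) (M : ℕ → ℝ) (x : ℝ) :
    wJ (-a) (-b) M F x = (1 - x) ^ (F.card - a) * (1 + x) ^ (F.card - b) /
      eval x (wronskianDet (jacobiHatFamily a b M F)) ^ 2 := by
  rw [wJ, OmegaJ_eq_eval_wronskianDet, show -(a : ℤ) + F.card = (F.card - a : ℕ) by omega,
    show -(b : ℤ) + F.card = (F.card - b : ℕ) by omega, zpow_natCast, zpow_natCast]

lemma wJ_pos {α β : ℤ} {x : ℝ} (hx : x ∈ Set.Ioo (-1) 1) (hΩ : OmegaJ α β M F x ≠ 0) :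
    0 < wJ α β M F x := by
  have hleft : 0 < 1 - x := by linarith [hx.2]
  have hright : 0 < 1 + x := by linarith [hx.1]
  unfold wJ
  positivity

lemma integrableOn_wJ (ha : a ≤ F.card) (hb : b ≤ F.card)
    (hΩ : ∀ x ∈ Set.Icc (-1) 1, OmegaJ (-a) (-b) M F x ≠ 0) :
    IntegrableOn (wJ (-a) (-b) M F) (Set.Icc (-1) 1) := by
  simp only [OmegaJ_eq_eval_wronskianDet] at hΩ
  rw [funext (wJ_eq ha hb M)]
  exact (ContinuousOn.div (by fun_prop) (by fun_prop)
    fun x hx => pow_ne_zero 2 (hΩ x hx)).integrableOn_Icc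

theorem integral_exJacobi_mul_exJacobi_eq_zero (hab : b ≤ a) (hF : Ico b (a + b) ⊆ F)
    (hΩ : ∀ x ∈ Set.Icc (-1) 1, OmegaJ (-a) (-b) M F x ≠ 0) {m n : ℕ} (hm : inSigma F m)
    (hn : inSigma F n) (hmn : m ≠ n) :
    ∫ x in (-1)..1, exJacobi (-a) (-b) M F m x * exJacobi (-a) (-b) M F n x *
      wJ (-a) (-b) M F x = 0 := by
  have ha := le_card_of_Ico_subset hF
  have hm' : m - uF F ∉ Ico b (a + b) := fun h => hm.2 (hF h)
  have hn' : n - uF F ∉ Ico b (a + b) := fun h => hn.2 (hF h)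
  rw [mem_Ico] at hm' hn'
  have heig : jacobiEigenvalue (-a) (-b) (m - uF F) ≠ jacobiEigenvalue (-a) (-b) (n - uF F) := by
    rw [Ne, jacobiEigenvalue_eq_iff, not_or]
    refine ⟨by have := hm.1; have := hn.1; omega, fun h => ?_⟩
    have : m - uF F + (n - uF F) + 1 = a + b := by
      have : ((m - uF F : ℕ) + (n - uF F : ℕ) + 1 : ℝ) = a + b := by linarith
      exact_mod_cast this
    omega
  simp only [OmegaJ_eq_eval_wronskianDet] at hΩ
  simp only [exJacobi_eq_eval_wronskianMap, wJ_eq ha (hab.trans ha)]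
  exact integral_wronskianMap_mul_jacobiWeight_eq_zero
    (by rw [Nat.cast_sub ha]; ring) (by rw [Nat.cast_sub (hab.trans ha)]; ring) heig
    (jacobiOperator_jacobiHatFamily_mem_span hF) hΩ
    (jacobiOperator_jacobiHat M (by omega)) (jacobiOperator_jacobiHat M (by omega))

lemma exists_sum_exJacobi_eq (hab : b ≤ a) (M : ℕ → ℝ) (F : Finset ℕ) (h : ℝ[X]) :
    ∃ (S : Finset ℕ) (c : ℕ → ℝ), (∀ n ∈ S, inSigma F n) ∧
      ∀ x, ∑ n ∈ S, c n * exJacobi (-a) (-b) M F n x = OmegaJ (-a) (-b) M F x ^ 2 * eval x h := by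
  obtain ⟨y, hy⟩ := exists_wronskianMap_eq (jacobiHatFamily a b M F) h
  obtain ⟨d, rfl⟩ := Finsupp.mem_span_range_iff_exists_finsupp.mp
    (span_range_jacobiHat hab M ▸ Submodule.mem_top (x := y))
  refine ⟨{p ∈ d.support | p ∉ F}.map (addRightEmbedding (uF F)), fun n => d (n - uF F),
    fun n hn => ?_, fun x => ?_⟩
  · obtain ⟨p, hp, rfl⟩ := mem_map.mp hn
    exact ⟨Nat.le_add_left _ _, by simpa using (mem_filter.mp hp).2⟩
  · rw [OmegaJ_eq_eval_wronskianDet, ← eval_pow, ← eval_mul, ← hy, Finsupp.sum, map_sum,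
      eval_finsetSum, sum_map, sum_filter]
    refine sum_congr rfl fun p _ => ?_
    split_ifs with hp
    · obtain ⟨i, hi⟩ := exists_jacobiHatFamily_eq (a := a) (b := b) (M := M) hp
      rw [← hi, map_smul, wronskianMap_self, smul_zero, eval_zero]
    · simp [exJacobi_eq_eval_wronskianMap]

theorem exists_eLpNorm_sub_sum_exJacobi_lt (hab : b ≤ a) (ha : a ≤ F.card)
    (hΩ : ∀ x ∈ Set.Icc (-1) 1, OmegaJ (-a) (-b) M F x ≠ 0) {g : ℝ → ℝ}
    (hg : MemLp g 2 (jacobiMeasure (-a) (-b) M F)) {ε : ℝ} (hε : 0 < ε) :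
    ∃ (S : Finset ℕ) (c : ℕ → ℝ), (∀ n ∈ S, inSigma F n) ∧
      eLpNorm (fun x => g x - ∑ n ∈ S, c n * exJacobi (-a) (-b) M F n x) 2
        (jacobiMeasure (-a) (-b) M F) < ENNReal.ofReal ε := by
  have : IsFiniteMeasure (jacobiMeasure (-a) (-b) M F) :=
    isFiniteMeasure_withDensity_ofReal (integrableOn_wJ ha (hab.trans ha) hΩ).2
  have hsupp : ∀ᵐ x ∂jacobiMeasure (-a) (-b) M F, x ∈ Set.Icc (-1) 1 :=
    (withDensity_absolutelyContinuous _ _).ae_le (ae_restrict_mem measurableSet_Icc)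
  have hcont : Continuous fun x => OmegaJ (-a) (-b) M F x ^ 2 := by
    simp only [OmegaJ_eq_eval_wronskianDet]
    fun_prop
  obtain ⟨h, hh⟩ := exists_eLpNorm_sub_mul_polynomial_le hsupp hcont
    (fun x hx => pow_ne_zero 2 (hΩ x hx)) one_le_two ENNReal.ofNat_ne_top hg
    (ε := ENNReal.ofReal (ε / 2)) (by simpa using hε)
  obtain ⟨S, c, hS, hsum⟩ := exists_sum_exJacobi_eq hab M F h
  refine ⟨S, c, hS, ?_⟩
  simp only [hsum]
  exact hh.trans_lt ((ENNReal.ofReal_lt_ofReal_iff hε).mpr (half_lt_self hε))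

end Exceptional

end ExceptionalJacobi

end

/-- orthogonality and completeness of the exceptional Jacobi polynomials with
respect to the positive weight `ω_{α,β;M,F}` on `[-1,1]`. -/
theorem exceptional_jacobi_orthogonality
    (α β : ℤ) (M : ℕ → ℝ) (F : Finset ℕ)
    (hαβ : α ≤ β) (hβ : β ≤ -1)
    (hM : ∀ i, M i ≠ 0 ∧ M i ≠ 1)
    (hFpos : ∀ f ∈ F, 0 < f)
    (hFc : ∀ k : ℕ, -β ≤ (k : ℤ) → (k : ℤ) ≤ -α - β - 1 → k ∈ F)
    (hΩ : ∀ x ∈ Set.Icc (-1 : ℝ) 1, OmegaJ α β M F x ≠ 0) :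
    (∀ x ∈ Set.Ioo (-1 : ℝ) 1, 0 < wJ α β M F x) ∧
    MeasureTheory.IntegrableOn (wJ α β M F) (Set.Icc (-1 : ℝ) 1) ∧
    (∀ m n : ℕ, inSigma F m → inSigma F n → m ≠ n →
      ∫ x in (-1 : ℝ)..1, exJacobi α β M F m x * exJacobi α β M F n x * wJ α β M F x = 0) ∧
    (∀ g : ℝ → ℝ, MeasureTheory.MemLp g 2 (jacobiMeasure α β M F) →
      ∀ ε : ℝ, 0 < ε →
        ∃ (S : Finset ℕ) (c : ℕ → ℝ), (∀ n ∈ S, inSigma F n) ∧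
          MeasureTheory.eLpNorm
              (fun x => g x - ∑ n ∈ S, c n * exJacobi α β M F n x) 2
              (jacobiMeasure α β M F) < ENNReal.ofReal ε) := by
  obtain ⟨a, rfl⟩ : ∃ a : ℕ, α = -(a : ℤ) := ⟨(-α).toNat, by omega⟩
  obtain ⟨b, rfl⟩ : ∃ b : ℕ, β = -(b : ℤ) := ⟨(-β).toNat, by omega⟩
  have hab : b ≤ a := by omega
  have hF : Ico b (a + b) ⊆ F := fun k hk => by
    rw [mem_Ico] at hk
    exact hFc k (by omega) (by omega)
  have ha : a ≤ F.card := ExceptionalJacobi.le_card_of_Ico_subset hF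
  exact ⟨fun x hx => ExceptionalJacobi.wJ_pos hx (hΩ x (Set.Ioo_subset_Icc_self hx)),
    ExceptionalJacobi.integrableOn_wJ ha (hab.trans ha) hΩ,
    fun m n => ExceptionalJacobi.integral_exJacobi_mul_exJacobi_eq_zero hab hF hΩ,
    fun g hg ε hε => ExceptionalJacobi.exists_eLpNorm_sub_sum_exJacobi_lt hab ha hΩ hg hε⟩
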